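/- arXiv:1304.2244 — 12 statements merged into one kernel-verified Lean document; each statement's English description precedes it below -/
import Mathlib

section
/- For every auction (M, v_1, …, v_n) with nonnegative, monotone, normalized valuations, and for every allocation Y = (Y_0, Y_1, …, Y_n), there exists a Combinatorial Walrasian Equilibrium (X, p) whose social welfare satisfies SW(X) ≥ (1/2)·SW(Y). -/
open Finset

/-- A valuation is nonnegative, monotone, and normalized. -/
def ValidVal {ι : Type} [Fintype ι] [DecidableEq ι] (v : Finset ι → ℝ) : Prop :=
  (∀ S, 0 ≤ v S) ∧ (∀ S T : Finset ι, S ⊆ T → v S ≤ v T) ∧ v ∅ = 0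

/-- The agents' bundles are pairwise disjoint (the unallocated bundle `X₀` is the complement). -/
def IsAlloc {ι : Type} [Fintype ι] [DecidableEq ι] {n : ℕ} (X : Fin n → Finset ι) : Prop :=
  ∀ i j, i ≠ j → Disjoint (X i) (X j)

/-- The unallocated bundle `X₀` of an allocation. -/
def unalloc {ι : Type} [Fintype ι] [DecidableEq ι] {n : ℕ} (X : Fin n → Finset ι) : Finset ι :=
  Finset.univ \ Finset.univ.sup X

/-- `Γ(X)`: the nonempty bundles among `X₀, X₁, …, Xₙ`. -/
def Bundles {ι : Type} [Fintype ι] [DecidableEq ι] {n : ℕ} (X : Fin n → Finset ι) :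
    Finset (Finset ι) :=
  (insert (unalloc X) (Finset.image X Finset.univ)).erase ∅

/-- Quasilinear utility of a set `S` of bundles under bundle prices `p`. -/
def util {ι : Type} [Fintype ι] [DecidableEq ι] (v : Finset ι → ℝ) (p : Finset ι → ℝ)
    (S : Finset (Finset ι)) : ℝ :=
  v (S.sup id) - ∑ B ∈ S, p B

/-- The set of bundles assigned to agent `i`: `{Xᵢ}` if nonempty, else `∅`. -/
def own {ι : Type} [Fintype ι] [DecidableEq ι] {n : ℕ} (X : Fin n → Finset ι) (i : Fin n) :
    Finset (Finset ι) :=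
  if X i = ∅ then ∅ else {X i}

/-- Combinatorial Walrasian Equilibrium: an allocation together with nonnegative prices on the
bundles of `Γ(X)` such that each agent's own assignment maximizes his quasilinear utility
over all sets of bundles `S ⊆ Γ(X)`. -/
def IsCWE {ι : Type} [Fintype ι] [DecidableEq ι] {n : ℕ} (v : Fin n → Finset ι → ℝ)
    (X : Fin n → Finset ι) (p : Finset ι → ℝ) : Prop :=
  IsAlloc X ∧ (∀ B ∈ Bundles X, 0 ≤ p B) ∧
    ∀ i : Fin n, ∀ S ⊆ Bundles X, util (v i) p S ≤ util (v i) p (own X i)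

/-- Social welfare of an allocation. -/
def SW {ι : Type} [Fintype ι] [DecidableEq ι] {n : ℕ} (v : Fin n → Finset ι → ℝ)
    (X : Fin n → Finset ι) : ℝ :=
  ∑ i, v i (X i)

/-- Revenue of a priced allocation: the sum of prices of the allocated bundles. -/
def Revenue {ι : Type} [Fintype ι] [DecidableEq ι] {n : ℕ} (X : Fin n → Finset ι)
    (p : Finset ι → ℝ) : ℝ :=
  ∑ i ∈ Finset.univ.filter (fun i => X i ≠ ∅), p (X i)

/-- `S` is a union of blocks. -/
def ClosedSet {n : ℕ} (X : Fin n → Finset (Fin n)) (S : Finset (Fin n)) : Prop :=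
  ∀ j, X j ⊆ S ∨ Disjoint (X j) S

/-- utility over index sets. -/
def uu {n : ℕ} (w : Fin n → Finset (Fin n) → ℝ) (p : Fin n → ℝ) (i : Fin n)
    (S : Finset (Fin n)) : ℝ := w i S - ∑ k ∈ S, p k

/-- auction state. -/
structure St {n : ℕ} (w : Fin n → Finset (Fin n) → ℝ) (b : Fin n → ℝ) (e : ℝ)
    (X : Fin n → Finset (Fin n)) (p : Fin n → ℝ) : Prop where
  disj : ∀ i j, i ≠ j → Disjoint (X i) (X j)
  low : ∀ k, b k ≤ p k
  uns : ∀ k, (∀ i, k ∉ X i) → p k = b k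
  dem : ∀ i, X i ≠ ∅ → ∀ S, ClosedSet X S → uu w p i S ≤ uu w p i (X i) + e

theorem closed_empty {n : ℕ} (X : Fin n → Finset (Fin n)) : ClosedSet X ∅ :=
  fun _ => Or.inr (Finset.disjoint_empty_right _)

theorem st_step {n : ℕ} (w : Fin n → Finset (Fin n) → ℝ) (b : Fin n → ℝ) (e : ℝ) (he : 0 < e)
    (hw0 : ∀ i, w i ∅ = 0) (X : Fin n → Finset (Fin n)) (p : Fin n → ℝ) (h : St w b e X p)
    (j : Fin n) (hj : X j = ∅) (S₀ : Finset (Fin n)) (hS₀ : ClosedSet X S₀)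
    (hu : e < uu w p j S₀) :
    ∃ X' p', St w b e X' p' ∧ ∑ k, p' k = ∑ k, p k + e := by
  classical
  obtain ⟨T, hT, hmax⟩ := Finset.exists_max_image
    (Finset.univ.filter (fun S => ClosedSet X S)) (fun S => uu w p j S) ⟨S₀, by simpa using hS₀⟩
  simp only [Finset.mem_filter, Finset.mem_univ, true_and] at hT hmax
  have hTne : T.Nonempty := by
    rw [Finset.nonempty_iff_ne_empty]
    rintro rfl
    have h1 := hmax _ hS₀
    have : uu w p j ∅ = 0 := by simp [uu, hw0]
    linarith
  obtain ⟨t, ht⟩ := hTne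
  let p' : Fin n → ℝ := fun k => p k + if k = t then e else 0
  let X' : Fin n → Finset (Fin n) := fun i => if i = j then T else if Disjoint (X i) T then X i else ∅
  have hX'j : X' j = T := by simp [X']
  have hsum : ∀ S : Finset (Fin n), ∑ k ∈ S, p' k = ∑ k ∈ S, p k + if t ∈ S then e else 0 := by
    intro S
    simp [p', Finset.sum_add_distrib]
  have hcl : ∀ S, ClosedSet X' S → ClosedSet X S := by
    intro S hS i
    by_cases hij : i = j
    · subst hij; rw [hj]; simp
    by_cases hd : Disjoint (X i) T
    · have := hS i
      simpa [X', hij, hd] using this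
    · have hsub : X i ⊆ T := (hT i).resolve_right hd
      have := hS j
      rw [hX'j] at this
      rcases this with h1 | h1
      · exact Or.inl (hsub.trans h1)
      · exact Or.inr (Finset.disjoint_of_subset_left hsub h1)
  have hle : ∀ i S, uu w p' i S ≤ uu w p i S := by
    intro i S
    simp only [uu, hsum]
    split_ifs <;> linarith
  refine ⟨X', p', ⟨?_, ?_, ?_, ?_⟩, ?_⟩
  · intro i k hik
    by_cases hi : i = j
    · subst hi
      have hk : k ≠ i := fun h => hik h.symm
      by_cases hd : Disjoint (X k) T
      · simpa [X', hk, hd] using hd.symm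
      · simp [X', hk, hd]
    · by_cases hk : k = j
      · subst hk
        by_cases hd : Disjoint (X i) T
        · simpa [X', hi, hd] using hd
        · simp [X', hi, hd]
      · have := h.disj i k hik
        simp only [X', hi, hk, if_false]
        split_ifs <;> simp [this]
  · intro k
    have := h.low k
    simp only [p']
    split_ifs <;> linarith
  · intro k hk
    have hkT : k ∉ T := by simpa [hX'j] using hk j
    have hkt : k ≠ t := fun h => hkT (h ▸ ht)
    have : p k = b k := by
      apply h.uns
      intro i hi
      by_cases hij : i = j
      · subst hij; rw [hj] at hi; simp at hi
      by_cases hd : Disjoint (X i) T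
      · exact hk i (by simpa [X', hij, hd] using hi)
      · exact hkT ((hT i).resolve_right hd hi)
    simp [p', hkt, this]
  · intro i hi S hS
    by_cases hij : i = j
    · subst hij
      rw [hX'j]
      have h1 := hle i S
      have h2 := hmax S (hcl S hS)
      have h3 : uu w p' i T = uu w p i T - e := by
        simp only [uu, hsum, ht, if_true]; ring
      linarith
    · by_cases hd : Disjoint (X i) T
      · have hX : X' i = X i := by simp [X', hij, hd]
        rw [hX] at hi ⊢
        have h1 := hle i S
        have h2 := h.dem i hi S (hcl S hS)
        have h3 : uu w p' i (X i) = uu w p i (X i) := by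
          have : t ∉ X i := fun hh => Finset.disjoint_left.1 hd hh ht
          simp [uu, hsum, this]
        linarith
      · exact absurd (by simp [X', hij, hd]) hi
  · rw [hsum]; simp

theorem st_bound {n : ℕ} (w : Fin n → Finset (Fin n) → ℝ) (b : Fin n → ℝ) (e C : ℝ) (he : 0 < e)
    (hw0 : ∀ i, w i ∅ = 0) (hb : ∀ k, 0 ≤ b k) (hbC : ∀ k, b k ≤ C) (hwC : ∀ i S, w i S ≤ C)
    (X : Fin n → Finset (Fin n)) (p : Fin n → ℝ) (h : St w b e X p) (k : Fin n) :
    p k ≤ C + e := by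
  by_cases hk : ∀ i, k ∉ X i
  · rw [h.uns k hk]; linarith [hbC k]
  · push Not at hk
    obtain ⟨i, hi⟩ := hk
    have h1 := h.dem i (Finset.ne_empty_of_mem hi) ∅ (closed_empty X)
    have h2 : p k ≤ ∑ k ∈ X i, p k :=
      Finset.single_le_sum (f := p) (fun k _ => (hb k).trans (h.low k)) hi
    simp only [uu, hw0, Finset.sum_empty] at h1
    linarith [hwC i (X i)]

theorem st_final {n : ℕ} (w : Fin n → Finset (Fin n) → ℝ) (b : Fin n → ℝ) (e C : ℝ) (he : 0 < e)
    (hw0 : ∀ i, w i ∅ = 0) (hb : ∀ k, 0 ≤ b k) (hbC : ∀ k, b k ≤ C) (hwC : ∀ i S, w i S ≤ C) :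
    ∃ X p, St w b e X p ∧ ∀ i S, ClosedSet X S → uu w p i S ≤ uu w p i (X i) + e := by
  by_contra hcon
  push Not at hcon
  have key : ∀ m : ℕ, ∃ X p, St w b e X p ∧ (m : ℝ) * e ≤ ∑ k, p k := by
    intro m
    induction m with
    | zero =>
      refine ⟨fun _ => ∅, b, ⟨by simp, by simp, by simp, by simp⟩, ?_⟩
      simpa using Finset.sum_nonneg (fun k _ => hb k)
    | succ m ih =>
      obtain ⟨X, p, h, hm⟩ := ih
      obtain ⟨j, S, hS, hlt⟩ := hcon X p h
      have hj : X j = ∅ := by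
        by_contra hne
        exact absurd (h.dem j hne S hS) (not_le.2 hlt)
      have h0 : uu w p j (X j) = 0 := by rw [hj]; simp [uu, hw0]
      obtain ⟨X', p', h', hs⟩ := st_step w b e he hw0 X p h j hj S hS (by linarith)
      refine ⟨X', p', h', ?_⟩
      push_cast
      linarith
  obtain ⟨m, hm⟩ := exists_nat_gt ((n * (C + e)) / e)
  obtain ⟨X, p, h, hmp⟩ := key m
  have h1 : ∑ k, p k ≤ ∑ _k : Fin n, (C + e) :=
    Finset.sum_le_sum (fun k _ => st_bound w b e C he hw0 hb hbC hwC X p h k)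
  rw [div_lt_iff₀ he] at hm
  simp at h1
  linarith

theorem st_welfare {n : ℕ} (w : Fin n → Finset (Fin n) → ℝ) (b : Fin n → ℝ) (e : ℝ)
    (hw0 : ∀ i, w i ∅ = 0) (hwb : ∀ i, w i {i} = 2 * b i)
    (X : Fin n → Finset (Fin n)) (p : Fin n → ℝ) (h : St w b e X p)
    (hf : ∀ i S, ClosedSet X S → uu w p i S ≤ uu w p i (X i) + e) :
    ∑ i, b i - n * e ≤ ∑ i, w i (X i) := by
  classical
  have hs : ∑ i, ∑ k ∈ X i, p k = ∑ k ∈ Finset.univ.biUnion X, p k :=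
    (Finset.sum_biUnion (fun i _ j _ hij => h.disj i j hij)).symm
  have hs2 : ∑ k ∈ Finset.univ.biUnion X, p k = ∑ k, if k ∈ Finset.univ.biUnion X then p k else 0 := by
    rw [Finset.sum_ite_mem]; simp
  have h1 : ∑ i, w i (X i) = ∑ i, (uu w p i (X i) + if i ∈ Finset.univ.biUnion X then p i else 0) := by
    rw [Finset.sum_add_distrib, ← hs2, ← hs, ← Finset.sum_add_distrib]
    simp [uu]
  rw [h1]
  have h2 : ∑ i, b i - n * e = ∑ i, (b i - e) := by
    rw [Finset.sum_sub_distrib]; simp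
  rw [h2]
  apply Finset.sum_le_sum
  intro i _
  split_ifs with hi
  · have := hf i ∅ (closed_empty X)
    have h0 : uu w p i ∅ = 0 := by simp [uu, hw0]
    linarith [h.low i]
  · have hi' : ∀ j, i ∉ X j := by simpa using hi
    have := hf i {i} (fun j => Or.inr (by simpa using hi' j))
    have h0 : uu w p i {i} = b i := by simp [uu, hwb, h.uns i hi']; ring
    linarith

theorem eps_cwe {ι : Type} [Fintype ι] [DecidableEq ι] (n : ℕ)
    (v : Fin n → Finset ι → ℝ) (hv : ∀ i, ValidVal (v i))
    (Y : Fin n → Finset ι) (hY : IsAlloc Y) :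
    ∃ D : ℝ, ∀ e : ℝ, 0 < e → e ≤ 1 → ∃ (X : Fin n → Finset ι) (P : Finset ι → ℝ),
      IsAlloc X ∧ (∀ B, 0 ≤ P B ∧ P B ≤ D) ∧
      (∀ i, ∀ S ⊆ Bundles X, util (v i) P S ≤ util (v i) P (own X i) + e) ∧
      (1 / 2) * SW v Y - n * e ≤ SW v X := by
  classical
  let C : ℝ := ∑ i, v i Finset.univ
  have hC0 : 0 ≤ C := Finset.sum_nonneg (fun i _ => (hv i).1 _)
  have hvC : ∀ i S, v i S ≤ C := fun i S =>
    ((hv i).2.1 S _ (Finset.subset_univ S)).trans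
      (Finset.single_le_sum (f := fun i => v i Finset.univ) (fun i _ => (hv i).1 _)
        (Finset.mem_univ i))
  refine ⟨C + n * (n * (C + 1)), fun e he he1 => ?_⟩
  let w : Fin n → Finset (Fin n) → ℝ := fun i S => v i (S.biUnion Y)
  let b : Fin n → ℝ := fun i => v i (Y i) / 2
  have hw0 : ∀ i, w i ∅ = 0 := fun i => by simpa [w] using (hv i).2.2
  have hb : ∀ k, 0 ≤ b k := fun k => by have := (hv k).1 (Y k); simp only [b]; linarith
  have hbC : ∀ k, b k ≤ C := fun k => by
    have := hvC k (Y k); have := (hv k).1 (Y k); simp only [b]; linarith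
  have hwC : ∀ i S, w i S ≤ C := fun i S => hvC i _
  obtain ⟨X, p, h, hf⟩ := st_final w b e C he hw0 hb hbC hwC
  have hp0 : ∀ k, 0 ≤ p k := fun k => (hb k).trans (h.low k)
  have hpC : ∀ k, p k ≤ C + 1 := fun k =>
    (st_bound w b e C he hw0 hb hbC hwC X p h k).trans (by linarith)
  have hwel := st_welfare w b e hw0 (fun i => by simp [w, b]; ring) X p h hf
  let Z : Fin n → Finset ι := fun i => (X i).biUnion Y
  have hZ : IsAlloc Z := by
    intro i j hij
    simp only [Z, Finset.disjoint_biUnion_left, Finset.disjoint_biUnion_right]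
    intro a ha c hc
    apply hY
    rintro rfl
    exact Finset.disjoint_left.1 (h.disj i j hij) hc ha
  let P : Finset ι → ℝ := fun B =>
    if B ∈ Finset.univ.image Z then ∑ i ∈ Finset.univ.filter (fun i => Z i = B), ∑ k ∈ X i, p k
    else C
  have hq0 : ∀ i, 0 ≤ ∑ k ∈ X i, p k := fun i => Finset.sum_nonneg (fun k _ => hp0 k)
  have hqD : ∀ i, ∑ k ∈ X i, p k ≤ n * (C + 1) := fun i =>
    calc ∑ k ∈ X i, p k ≤ ∑ k, p k :=
          Finset.sum_le_sum_of_subset_of_nonneg (Finset.subset_univ _) (fun k _ _ => hp0 k)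
      _ ≤ ∑ _k : Fin n, (C + 1) := Finset.sum_le_sum (fun k _ => hpC k)
      _ = n * (C + 1) := by rw [Finset.sum_const]; simp only [Finset.card_univ, Fintype.card_fin, nsmul_eq_mul]
  have hP0 : ∀ B, 0 ≤ P B := by
    intro B
    simp only [P]
    split_ifs
    · exact Finset.sum_nonneg (fun i _ => hq0 i)
    · exact hC0
  have hPD : ∀ B, P B ≤ C + n * (n * (C + 1)) := by
    intro B
    simp only [P]
    split_ifs
    · calc _ ≤ ∑ i, ∑ k ∈ X i, p k :=
            Finset.sum_le_sum_of_subset_of_nonneg (Finset.subset_univ _) (fun k _ _ => hq0 k)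
        _ ≤ ∑ _i : Fin n, n * (C + 1) := Finset.sum_le_sum (fun k _ => hqD k)
        _ = n * (n * (C + 1)) := by simp
        _ ≤ _ := by linarith
    · have : 0 ≤ (n : ℝ) * (n * (C + 1)) := by positivity
      linarith
  have hown : ∀ i, uu w p i (X i) ≤ util (v i) P (own Z i) := by
    intro i
    by_cases hZi : Z i = ∅
    · have h1 : own Z i = ∅ := by simp [own, hZi]
      have h2 : w i (X i) = 0 := by
        change v i (Z i) = 0
        rw [hZi]; exact (hv i).2.2
      rw [h1]
      simp only [util, uu, h2, Finset.sup_empty, Finset.sum_empty]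
      have h3 : v i ⊥ = 0 := (hv i).2.2
      linarith [hq0 i]
    · have h1 : own Z i = {Z i} := by simp [own, hZi]
      have h2 : Finset.univ.filter (fun j => Z j = Z i) = {i} := by
        ext j
        simp only [Finset.mem_filter, Finset.mem_univ, true_and, Finset.mem_singleton]
        refine ⟨fun hj => ?_, fun hj => by rw [hj]⟩
        by_contra hne
        have := hZ j i hne
        rw [hj] at this
        exact hZi (by simpa using this)
      have h3 : P (Z i) = ∑ k ∈ X i, p k := by
        simp only [P]
        rw [if_pos (Finset.mem_image_of_mem _ (Finset.mem_univ i)), h2, Finset.sum_singleton]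
      rw [h1]
      simp [util, uu, h3, w, Z]
  refine ⟨Z, P, hZ, fun B => ⟨hP0 B, hPD B⟩, ?_, ?_⟩
  · intro i S hS
    by_cases hall : S ⊆ Finset.univ.image Z
    · let I := Finset.univ.filter (fun j => Z j ∈ S)
      let T := I.biUnion X
      have hTc : ClosedSet X T := by
        intro j
        by_cases hj : j ∈ I
        · exact Or.inl (Finset.subset_biUnion_of_mem X hj)
        · right
          simp only [T, Finset.disjoint_biUnion_right]
          intro a ha
          exact h.disj j a (fun hh => hj (hh ▸ ha))
      have h1 := hf i T hTc
      have h2 : S.sup id = T.biUnion Y := by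
        ext x
        simp only [Finset.mem_sup, id, T, I, Finset.mem_biUnion, Finset.mem_filter,
          Finset.mem_univ, true_and]
        constructor
        · rintro ⟨B, hB, hx⟩
          obtain ⟨j, -, rfl⟩ := Finset.mem_image.1 (hall hB)
          obtain ⟨k, hk, hxk⟩ := Finset.mem_biUnion.1 hx
          exact ⟨k, ⟨j, hB, hk⟩, hxk⟩
        · rintro ⟨k, ⟨j, hB, hk⟩, hxk⟩
          exact ⟨Z j, hB, Finset.mem_biUnion.2 ⟨k, hk, hxk⟩⟩
      have h3 : ∑ B ∈ S, P B = ∑ k ∈ T, p k := by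
        have e1 : ∑ k ∈ T, p k = ∑ j ∈ I, ∑ k ∈ X j, p k :=
          Finset.sum_biUnion (fun i _ j _ hij => h.disj i j hij)
        have e2 : ∑ j ∈ I, ∑ k ∈ X j, p k
            = ∑ B ∈ S, ∑ j ∈ I.filter (fun j => Z j = B), ∑ k ∈ X j, p k :=
          (Finset.sum_fiberwise_of_maps_to (fun j hj => (Finset.mem_filter.1 hj).2) _).symm
        rw [e1, e2]
        apply Finset.sum_congr rfl
        intro B hB
        simp only [P]
        rw [if_pos (hall hB)]
        apply Finset.sum_congr _ (fun _ _ => rfl)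
        ext j
        simp only [I, Finset.mem_filter, Finset.mem_univ, true_and]
        exact ⟨fun hj => ⟨hj ▸ hB, hj⟩, fun hj => hj.2⟩
      have h4 : util (v i) P S = uu w p i T := by
        simp only [util, uu, h2, h3, w]
      rw [h4]
      linarith [hown i]
    · obtain ⟨B, hB, hBn⟩ := Finset.not_subset.1 hall
      have hPB : P B = C := by simp only [P]; rw [if_neg hBn]
      have h1 : P B ≤ ∑ B ∈ S, P B := Finset.single_le_sum (f := P) (fun B _ => hP0 B) hB
      have h2 := hvC i (S.sup id)
      have h3 := hf i ∅ (closed_empty X)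
      have h0 : uu w p i ∅ = 0 := by simp [uu, hw0]
      have h4 := hown i
      have h5 : util (v i) P S ≤ 0 := by simp only [util]; linarith
      linarith
  · have : (1 / 2) * SW v Y = ∑ i, b i := by
      simp only [SW, b, Finset.mul_sum]
      exact Finset.sum_congr rfl (fun i _ => by ring)
    rw [this]
    exact hwel

/-- For every auction with nonnegative, monotone, normalized valuations, and for
every allocation `Y`, there exists a CWE `(X, p)` with `SW(X) ≥ (1/2)·SW(Y)`. -/
theorem cwe_half_welfare_of_allocation {ι : Type} [Fintype ι] [DecidableEq ι] (n : ℕ)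
    (v : Fin n → Finset ι → ℝ) (hv : ∀ i, ValidVal (v i))
    (Y : Fin n → Finset ι) (hY : IsAlloc Y) :
    ∃ (X : Fin n → Finset ι) (p : Finset ι → ℝ),
      IsCWE v X p ∧ SW v X ≥ (1 / 2) * SW v Y := by
  classical
  obtain ⟨D, hD⟩ := eps_cwe n v hv Y hY
  have hX : ∃ X : Fin n → Finset ι, ∀ e : ℝ, 0 < e → e ≤ 1 → ∃ P : Finset ι → ℝ,
      IsAlloc X ∧ (∀ B, 0 ≤ P B ∧ P B ≤ D) ∧
      (∀ i, ∀ S ⊆ Bundles X, util (v i) P S ≤ util (v i) P (own X i) + e) ∧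
      (1 / 2) * SW v Y - n * e ≤ SW v X := by
    by_contra hcon
    have hcon' : ∀ X : Fin n → Finset ι, ∃ e : ℝ, 0 < e ∧ e ≤ 1 ∧ ¬ ∃ P : Finset ι → ℝ,
        IsAlloc X ∧ (∀ B, 0 ≤ P B ∧ P B ≤ D) ∧
        (∀ i, ∀ S ⊆ Bundles X, util (v i) P S ≤ util (v i) P (own X i) + e) ∧
        (1 / 2) * SW v Y - n * e ≤ SW v X := by
      intro X
      by_contra hX
      apply hcon
      refine ⟨X, fun e he he1 => ?_⟩
      by_contra hP
      exact hX ⟨e, he, he1, hP⟩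
    choose f hf0 hf1 hf using hcon'
    obtain ⟨X₀, -, hmin⟩ := Finset.exists_min_image Finset.univ f ⟨Y, Finset.mem_univ _⟩
    obtain ⟨X, P, h1, h2, h3, h4⟩ := hD (f X₀) (hf0 _) (hf1 _)
    have hle := hmin X (Finset.mem_univ _)
    refine hf X ⟨P, h1, h2, fun i S hS => (h3 i S hS).trans (by linarith), ?_⟩
    have : (n : ℝ) * f X₀ ≤ n * f X := mul_le_mul_of_nonneg_left hle (Nat.cast_nonneg n)
    linarith
  obtain ⟨X, hX⟩ := hX
  have hpos : ∀ m : ℕ, (0 : ℝ) < 1 / ((m : ℝ) + 1) := fun m => by positivity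
  have hle1 : ∀ m : ℕ, 1 / ((m : ℝ) + 1) ≤ 1 := fun m => by
    rw [div_le_one (by positivity)]
    have : (0 : ℝ) ≤ m := Nat.cast_nonneg m
    linarith
  choose P hA hB hU hW using fun m : ℕ => hX (1 / ((m : ℝ) + 1)) (hpos m) (hle1 m)
  have hlim : Filter.Tendsto (fun m : ℕ => 1 / ((m : ℝ) + 1)) Filter.atTop (nhds 0) :=
    tendsto_one_div_add_atTop_nhds_zero_nat
  have hcomp : IsCompact (Set.Icc (fun _ : Finset ι => (0 : ℝ)) (fun _ => D)) := isCompact_Icc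
  obtain ⟨q, hq, φ, hφ, hconv⟩ := hcomp.tendsto_subseq
    (x := P) (fun m => ⟨fun B => (hB m B).1, fun B => (hB m B).2⟩)
  have hlimφ := hlim.comp hφ.tendsto_atTop
  have hconvB : ∀ B, Filter.Tendsto (fun m => P (φ m) B) Filter.atTop (nhds (q B)) :=
    fun B => (tendsto_pi_nhds.1 hconv) B
  have hconvU : ∀ i S, Filter.Tendsto (fun m => util (v i) (P (φ m)) S) Filter.atTop
      (nhds (util (v i) q S)) := by
    intro i S
    exact tendsto_const_nhds.sub (tendsto_finsetSum _ (fun B _ => hconvB B))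
  refine ⟨X, q, ⟨hA 0, fun B _ => hq.1 B, fun i S hS => ?_⟩, ?_⟩
  · have h1 := (hconvU i (own X i)).add hlimφ
    rw [add_zero] at h1
    exact le_of_tendsto_of_tendsto' (hconvU i S) h1 (fun m => hU (φ m) i S hS)
  · have h1 : Filter.Tendsto (fun m : ℕ => (1 / 2) * SW v Y - n * (1 / ((m : ℝ) + 1)))
        Filter.atTop (nhds ((1 / 2) * SW v Y - n * 0)) :=
      tendsto_const_nhds.sub (tendsto_const_nhds.mul hlim)
    have h2 := le_of_tendsto' h1 hW
    simpa using h2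
end

section
/- For every auction (M, v_1, …, v_n) with nonnegative, monotone, normalized valuations, there exists a Combinatorial Walrasian Equilibrium (X, p) whose social welfare satisfies SW(X) ≥ (1/2)·max_Z SW(Z), where the maximum is over all allocations Z; i.e., every valuation profile admits a CWE that obtains at least half of the optimal (unconstrained) social welfare. -/
open Finset

def Clo {n : ℕ} (A : Fin n → Finset (Fin n)) (T : Finset (Fin n)) : Prop :=
  ∀ j, A j ⊆ T ∨ Disjoint (A j) T

def Sat {n : ℕ} (w : Finset (Fin n) → ℝ) (A : Fin n → Finset (Fin n)) (q : Fin n → ℝ)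
    (ε : ℝ) (k : Fin n) : Prop :=
  ∀ T, Clo A T → w T - ∑ j ∈ T, q j ≤ w (A k) - ∑ j ∈ A k, q j + ε

structure PSt {n : ℕ} (w : Fin n → Finset (Fin n) → ℝ) (r : Fin n → ℝ) (ε : ℝ)
    (A : Fin n → Finset (Fin n)) (q : Fin n → ℝ) : Prop where
  disj : ∀ i j, i ≠ j → Disjoint (A i) (A j)
  lb : ∀ j, r j ≤ q j
  res : ∀ j, (∀ k, j ∉ A k) → q j = r j
  sat : ∀ k, A k = ∅ ∨ Sat (w k) A q ε k

theorem pst_bound {n : ℕ} {w : Fin n → Finset (Fin n) → ℝ} {r : Fin n → ℝ} {ε V : ℝ}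
    {A : Fin n → Finset (Fin n)} {q : Fin n → ℝ} (hε0 : 0 < ε) (hε : ε ≤ 1)
    (hr : ∀ j, 0 ≤ r j) (hw0 : ∀ k, w k ∅ = 0) (hV0 : 0 ≤ V) (hV : ∀ k T, w k T ≤ V)
    (h : PSt w r ε A q) (j : Fin n) : q j ≤ V + 1 + r j := by
  by_cases hj : ∀ k, j ∉ A k
  · rw [h.res j hj]; linarith
  · push Not at hj
    obtain ⟨k, hk⟩ := hj
    rcases h.sat k with h0 | h0
    · rw [h0] at hk; simp at hk
    · have h1 := h0 ∅ (fun j => Or.inr (Finset.disjoint_empty_right _))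
      simp only [hw0, Finset.sum_empty] at h1
      have h2 : q j ≤ ∑ j ∈ A k, q j :=
        Finset.single_le_sum (fun i _ => (hr i).trans (h.lb i)) hk
      have := hV k (A k)
      have := hr j
      linarith

theorem pst_step {n : ℕ} {w : Fin n → Finset (Fin n) → ℝ} {r : Fin n → ℝ} {ε : ℝ}
    {A : Fin n → Finset (Fin n)} {q : Fin n → ℝ} (hε0 : 0 < ε)
    (hw0 : ∀ k, w k ∅ = 0)
    (h : PSt w r ε A q) (k : Fin n) (hk : ¬ Sat (w k) A q ε k) :
    ∃ A' q', PSt w r ε A' q' ∧ ∑ j, q' j = ∑ j, q j + ε := by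
  classical
  have hA : A k = ∅ := (h.sat k).resolve_right hk
  obtain ⟨T, hT, hmax⟩ := Finset.exists_max_image
    (Finset.univ.filter (fun T => Clo A T)) (fun T => w k T - ∑ j ∈ T, q j)
    ⟨∅, Finset.mem_filter.mpr ⟨Finset.mem_univ _, fun j => Or.inr (Finset.disjoint_empty_right _)⟩⟩
  simp only [Finset.mem_filter, Finset.mem_univ, true_and] at hT hmax
  have hne : T.Nonempty := by
    rw [Finset.nonempty_iff_ne_empty]
    rintro rfl
    apply hk
    intro T' hT'
    have := hmax T' hT'
    simp only [hA]
    linarith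
  obtain ⟨t, ht⟩ := hne
  let A' : Fin n → Finset (Fin n) := fun j => if j = k then T else A j \ T
  let q' : Fin n → ℝ := fun j => q j + if j = t then ε else 0
  have hA'k : A' k = T := by simp [A']
  have hA'j : ∀ j, j ≠ k → A' j = A j \ T := fun j hj => by simp [A', hj]
  have hq : ∀ j, q j ≤ q' j := fun j => by
    simp only [q']; split_ifs <;> linarith
  have hsum : ∀ S : Finset (Fin n), ∑ j ∈ S, q' j = ∑ j ∈ S, q j + if t ∈ S then ε else 0 := by
    intro S
    simp [q', Finset.sum_add_distrib]
  have hclo : ∀ S, Clo A' S → Clo A S := by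
    intro S hS j
    by_cases hjk : j = k
    · subst hjk; left; rw [hA]; simp
    rcases hT j with h1 | h1
    · have := hS k
      rw [hA'k] at this
      rcases this with h2 | h2
      · exact Or.inl (h1.trans h2)
      · exact Or.inr (Finset.disjoint_of_subset_left h1 h2)
    · have := hS j
      rwa [hA'j j hjk, Finset.sdiff_eq_self_of_disjoint h1] at this
  refine ⟨A', q', ⟨?_, ?_, ?_, ?_⟩, ?_⟩
  · intro i j hij
    by_cases hi : i = k
    · subst hi
      rw [hA'k, hA'j j (Ne.symm hij)]
      exact Finset.disjoint_sdiff
    · by_cases hj : j = k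
      · subst hj
        rw [hA'k, hA'j i hi]
        exact Finset.sdiff_disjoint
      · rw [hA'j i hi, hA'j j hj]
        exact Finset.disjoint_of_subset_left Finset.sdiff_subset
          (Finset.disjoint_of_subset_right Finset.sdiff_subset (h.disj i j hij))
  · exact fun j => (h.lb j).trans (hq j)
  · intro j hj
    have hjT : j ∉ T := by have := hj k; rwa [hA'k] at this
    have hjt : j ≠ t := fun e => hjT (e ▸ ht)
    have : q' j = q j := by simp [q', hjt]
    rw [this]
    apply h.res
    intro i
    by_cases hi : i = k
    · subst hi; rw [hA]; simp
    · have := hj i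
      rw [hA'j i hi] at this
      simp only [Finset.mem_sdiff, not_and, not_not] at this
      exact fun hh => hjT (this hh)
  · intro i
    by_cases hi : i = k
    · subst hi
      right
      intro S hS
      have h1 := hmax S (hclo S hS)
      have h2 : ∑ j ∈ S, q j ≤ ∑ j ∈ S, q' j := Finset.sum_le_sum (fun j _ => hq j)
      rw [hA'k, hsum T, if_pos ht]
      linarith
    · rcases hT i with h1 | h1
      · left
        rw [hA'j i hi]; exact Finset.sdiff_eq_empty_iff_subset.mpr h1
      · have h3 : A' i = A i := by rw [hA'j i hi, Finset.sdiff_eq_self_of_disjoint h1]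
        rw [h3]
        refine (h.sat i).imp id (fun h4 => ?_)
        intro S hS
        have h5 := h4 S (hclo S hS)
        have h2 : ∑ j ∈ S, q j ≤ ∑ j ∈ S, q' j := Finset.sum_le_sum (fun j _ => hq j)
        have h6 : t ∉ A i := fun hh => (Finset.disjoint_left.mp h1 hh) ht
        rw [h3, hsum (A i), if_neg h6]
        linarith
  · rw [hsum]; simp

theorem pst_eps {n : ℕ} {w : Fin n → Finset (Fin n) → ℝ} {r : Fin n → ℝ} {ε V : ℝ}
    (hε0 : 0 < ε) (hε : ε ≤ 1)
    (hr : ∀ j, 0 ≤ r j) (hw0 : ∀ k, w k ∅ = 0) (hV0 : 0 ≤ V) (hV : ∀ k T, w k T ≤ V) :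
    ∃ A q, PSt w r ε A q ∧ ∀ k, Sat (w k) A q ε k := by
  let Φ : Set ℝ := {x | ∃ A q, PSt w r ε A q ∧ ∑ j, q j = x}
  have hne : Φ.Nonempty := ⟨_, fun _ => ∅, r, ⟨by simp, by simp, by simp, by simp⟩, rfl⟩
  have hb : BddAbove Φ := by
    refine ⟨∑ j, (V + 1 + r j), ?_⟩
    rintro x ⟨A, q, h, rfl⟩
    exact Finset.sum_le_sum (fun j _ => pst_bound hε0 hε hr hw0 hV0 hV h j)
  obtain ⟨x, ⟨A, q, h, rfl⟩, hx⟩ := exists_lt_of_lt_csSup hne (sub_lt_self (sSup Φ) hε0)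
  refine ⟨A, q, h, ?_⟩
  by_contra hc
  push Not at hc
  obtain ⟨k, hk⟩ := hc
  obtain ⟨A', q', h', hs⟩ := pst_step hε0 hw0 h k hk
  have := le_csSup hb ⟨A', q', h', rfl⟩
  linarith

theorem pst_zero {n : ℕ} {w : Fin n → Finset (Fin n) → ℝ} {r : Fin n → ℝ} {V : ℝ}
    (hr : ∀ j, 0 ≤ r j) (hw0 : ∀ k, w k ∅ = 0) (hV0 : 0 ≤ V) (hV : ∀ k T, w k T ≤ V) :
    ∃ A q, PSt w r 0 A q ∧ ∀ k, Sat (w k) A q 0 k := by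
  classical
  let P : ℝ → (Fin n → Finset (Fin n)) → (Fin n → ℝ) → Prop :=
    fun ε A q => PSt w r ε A q ∧ ∀ k, Sat (w k) A q ε k
  have hmono : ∀ ε ε' A q, ε ≤ ε' → P ε A q → P ε' A q := by
    intro ε ε' A q hle h
    have : ∀ k, Sat (w k) A q ε' k := fun k T hT => by
      have := h.2 k T hT
      linarith
    exact ⟨⟨h.1.disj, h.1.lb, h.1.res, fun k => Or.inr (this k)⟩, this⟩
  have hA : ∃ A, ∀ m : ℕ, ∃ q, P (1 / ((m : ℝ) + 1)) A q := by
    by_contra hc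
    push Not at hc
    choose f hf using hc
    let N := Finset.univ.sup f
    obtain ⟨A, q, hP⟩ := pst_eps (w := w) (r := r) (ε := 1 / ((N : ℝ) + 1))
      (Nat.one_div_pos_of_nat) (by
        rw [div_le_one (by positivity)]
        have : (0 : ℝ) ≤ N := Nat.cast_nonneg _
        linarith) hr hw0 hV0 hV
    exact hf A q (hmono _ _ A q
      (Nat.one_div_le_one_div (Finset.le_sup (f := f) (Finset.mem_univ A))) hP)
  obtain ⟨A, hA⟩ := hA
  let K : ℕ → Set (Fin n → ℝ) := fun m => {q | P (1 / ((m : ℝ) + 1)) A q}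
  have hclosed : ∀ m, IsClosed (K m) := by
    intro m
    obtain ⟨q0, hq0⟩ := hA m
    have : K m = {q | (∀ j, r j ≤ q j) ∧ (∀ j, (∀ k, j ∉ A k) → q j = r j) ∧
        ∀ k T, Clo A T → w k T - ∑ j ∈ T, q j ≤
          w k (A k) - ∑ j ∈ A k, q j + 1 / ((m : ℝ) + 1)} := by
      ext q
      constructor
      · intro h
        exact ⟨h.1.lb, h.1.res, h.2⟩
      · rintro ⟨h1, h2, h3⟩
        exact ⟨⟨hq0.1.disj, h1, h2, fun k => Or.inr (h3 k)⟩, h3⟩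
    rw [this]
    simp only [Set.ofPred_and, Set.ofPred_forall]
    refine IsClosed.inter ?_ (IsClosed.inter ?_ ?_)
    · exact isClosed_iInter fun j => isClosed_le (by fun_prop) (by fun_prop)
    · exact isClosed_iInter fun j => isClosed_iInter fun _ =>
        isClosed_eq (by fun_prop) (by fun_prop)
    · exact isClosed_iInter fun k => isClosed_iInter fun T => isClosed_iInter fun _ =>
        isClosed_le (by fun_prop) (by fun_prop)
  have hcomp : IsCompact (K 0) := by
    refine IsCompact.of_isClosed_subset (isCompact_Icc (a := r) (b := fun j => V + 1 + r j))
      (hclosed 0) ?_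
    intro q hq
    exact ⟨hq.1.lb, fun j => pst_bound (by norm_num) (by norm_num) hr hw0 hV0 hV hq.1 j⟩
  obtain ⟨q, hq⟩ := IsCompact.nonempty_iInter_of_sequence_nonempty_isCompact_isClosed K
    (fun m q hq => hmono _ _ A q (Nat.one_div_le_one_div (Nat.le_succ m)) hq)
    (fun m => hA m) hcomp hclosed
  rw [Set.mem_iInter] at hq
  have hs : ∀ k, Sat (w k) A q 0 k := by
    intro k T hT
    rw [add_zero]
    refine le_of_forall_pos_le_add fun ε hε => ?_
    obtain ⟨m, hm⟩ := exists_nat_one_div_lt hε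
    have := (hq m).2 k T hT
    linarith
  exact ⟨A, q, ⟨(hq 0).1.disj, (hq 0).1.lb, (hq 0).1.res, fun k => Or.inr (hs k)⟩, hs⟩

theorem pst_welfare {n : ℕ} {w : Fin n → Finset (Fin n) → ℝ} {r : Fin n → ℝ}
    {A : Fin n → Finset (Fin n)} {q : Fin n → ℝ}
    (hw0 : ∀ k, w k ∅ = 0) (hr : ∀ k, w k {k} = 2 * r k)
    (h : PSt w r 0 A q) (hs : ∀ k, Sat (w k) A q 0 k) :
    ∑ k, r k ≤ ∑ k, w k (A k) := by
  classical
  let U := Finset.univ.biUnion A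
  have hU : ∑ k, ∑ j ∈ A k, q j = ∑ j ∈ U, q j :=
    (Finset.sum_biUnion (fun i _ j _ hij => h.disj i j hij)).symm
  have h1 : ∀ k, (if k ∈ U then 0 else r k) ≤ w k (A k) - ∑ j ∈ A k, q j := by
    intro k
    split_ifs with hk
    · have := hs k ∅ (fun j => Or.inr (Finset.disjoint_empty_right _))
      simpa [hw0] using this
    · have hk' : ∀ j, k ∉ A j := fun j hj => hk (by simp only [U, Finset.mem_biUnion]; exact ⟨j, by simp, hj⟩)
      have := hs k {k} (fun j => Or.inr (by simpa using hk' j))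
      rw [hr, Finset.sum_singleton, h.res k hk'] at this
      linarith
  have h2 := Finset.sum_le_sum (s := Finset.univ) (fun k _ => h1 k)
  rw [Finset.sum_sub_distrib, hU] at h2
  have h3 : ∑ j ∈ U, r j ≤ ∑ j ∈ U, q j := Finset.sum_le_sum (fun j _ => h.lb j)
  have h4 : ∑ k, r k = ∑ k, (if k ∈ U then 0 else r k) + ∑ j ∈ U, r j := by
    rw [← Finset.sum_filter_add_sum_filter_not Finset.univ (fun k => k ∈ U), add_comm,
      Finset.sum_ite]
    simp
  linarith

/-- Every valuation profile admits a CWE obtaining at least half of the optimal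
(unconstrained) social welfare. -/
theorem cwe_half_optimal_welfare {ι : Type} [Fintype ι] [DecidableEq ι] (n : ℕ)
    (v : Fin n → Finset ι → ℝ) (hv : ∀ i, ValidVal (v i)) :
    ∃ (X : Fin n → Finset ι) (p : Finset ι → ℝ),
      IsCWE v X p ∧ ∀ Z : Fin n → Finset ι, IsAlloc Z → SW v X ≥ (1 / 2) * SW v Z := by
  classical
  obtain ⟨Z, hZ, hopt⟩ := Finset.exists_max_image
    (Finset.univ.filter (fun Z : Fin n → Finset ι => IsAlloc Z)) (SW v)
    ⟨fun _ => ∅, Finset.mem_filter.mpr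
      ⟨Finset.mem_univ _, fun _ _ _ => Finset.disjoint_empty_right _⟩⟩
  simp only [Finset.mem_filter, Finset.mem_univ, true_and] at hZ hopt
  let w : Fin n → Finset (Fin n) → ℝ := fun k T => v k (T.biUnion Z)
  let r : Fin n → ℝ := fun k => v k (Z k) / 2
  let V : ℝ := ∑ k, v k Finset.univ
  have hVk : ∀ k, v k Finset.univ ≤ V := fun k =>
    Finset.single_le_sum (f := fun k => v k Finset.univ) (fun i _ => (hv i).1 _) (Finset.mem_univ k)
  have hw0 : ∀ k, w k ∅ = 0 := fun k => by simp [w, (hv k).2.2]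
  have hr0 : ∀ k, 0 ≤ r k := fun k => div_nonneg ((hv k).1 _) (by norm_num)
  have hV0 : 0 ≤ V := Finset.sum_nonneg (fun i _ => (hv i).1 _)
  obtain ⟨A, q, h, hs⟩ := pst_zero (w := w) (r := r) (V := V) hr0 hw0 hV0
    (fun k T => ((hv k).2.1 _ _ (Finset.subset_univ _)).trans (hVk k))
  have hwel := pst_welfare hw0 (fun k => by simp [w, r]; ring) h hs
  have hq0 : ∀ j, 0 ≤ q j := fun j => (hr0 j).trans (h.lb j)
  let X : Fin n → Finset ι := fun k => (A k).biUnion Z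
  have hX : IsAlloc X := by
    intro i j hij
    simp only [X, Finset.disjoint_biUnion_left, Finset.disjoint_biUnion_right]
    intro a ha b hb
    apply hZ
    rintro rfl
    exact Finset.disjoint_left.mp (h.disj i j hij) ‹_› ‹_›
  let p : Finset ι → ℝ := fun B =>
    if hB : ∃ k, X k = B then ∑ j ∈ A hB.choose, q j else V
  have hinj : ∀ i j, X i ≠ ∅ → X i = X j → i = j := by
    intro i j hi hij
    by_contra hne
    have := hX i j hne
    rw [← hij, disjoint_self] at this
    exact hi this
  have hpX : ∀ k, X k ≠ ∅ → p (X k) = ∑ j ∈ A k, q j := by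
    intro k hk
    have hB : ∃ k', X k' = X k := ⟨k, rfl⟩
    simp only [p, dif_pos hB]
    have e : k = hB.choose := hinj k hB.choose hk hB.choose_spec.symm
    exact congrArg (fun a => ∑ j ∈ A a, q j) e.symm
  have hp0 : ∀ B, 0 ≤ p B := by
    intro B
    simp only [p]
    split_ifs
    · exact Finset.sum_nonneg (fun j _ => hq0 j)
    · exact hV0
  have hown : ∀ i, w i (A i) - ∑ j ∈ A i, q j ≤ util (v i) p (own X i) := by
    intro i
    unfold own util
    split_ifs with hi
    · have h1 : w i (A i) = 0 := by
        change v i (X i) = 0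
        rw [hi, (hv i).2.2]
      have h2 : 0 ≤ ∑ j ∈ A i, q j := Finset.sum_nonneg (fun j _ => hq0 j)
      simp only [Finset.sup_empty, Finset.bot_eq_empty, (hv i).2.2, Finset.sum_empty]
      linarith
    · rw [Finset.sum_singleton, hpX i hi, Finset.sup_singleton]
      exact le_rfl
  refine ⟨X, p, ⟨hX, fun B _ => hp0 B, ?_⟩, ?_⟩
  · intro i S hS
    by_cases hall : ∀ B ∈ S, ∃ k, X k = B
    · have hSne : ∀ B ∈ S, B ≠ ∅ := fun B hB => (Finset.mem_erase.mp (hS hB)).1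
      let J := Finset.univ.filter (fun k => X k ∈ S)
      have hSJ : S = J.image X := by
        ext B
        simp only [J, Finset.mem_image, Finset.mem_filter, Finset.mem_univ, true_and]
        constructor
        · intro hB
          obtain ⟨k, hk⟩ := hall B hB
          exact ⟨k, hk ▸ hB, hk⟩
        · rintro ⟨k, hk, rfl⟩
          exact hk
      have hJne : ∀ k ∈ J, X k ≠ ∅ := fun k hk => hSne _ (Finset.mem_filter.mp hk).2
      have hclo : Clo A (J.biUnion A) := by
        intro j
        by_cases hj : j ∈ J
        · exact Or.inl (Finset.subset_biUnion_of_mem A hj)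
        · right
          rw [Finset.disjoint_biUnion_right]
          intro k hk
          exact h.disj j k (fun e => hj (e ▸ hk))
      have h1 := hs i _ hclo
      rw [Finset.sum_biUnion (fun a _ b _ hab => h.disj a b hab), add_zero] at h1
      have h2 : w i (J.biUnion A) = v i (S.sup id) := by
        simp only [w]
        congr 1
        rw [Finset.biUnion_biUnion, hSJ, Finset.sup_image, Finset.sup_eq_biUnion]
        rfl
      have h3 : ∑ B ∈ S, p B = ∑ k ∈ J, ∑ j ∈ A k, q j := by
        rw [hSJ, Finset.sum_image (fun a ha b hb hab => hinj a b (hJne a ha) hab)]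
        exact Finset.sum_congr rfl (fun k hk => hpX k (hJne k hk))
      refine le_trans ?_ (hown i)
      unfold util
      rw [h3, ← h2]
      exact h1
    · push Not at hall
      obtain ⟨B, hB, hBX⟩ := hall
      have hpB : p B = V := by
        simp only [p]
        rw [dif_neg]
        rintro ⟨k, hk⟩
        exact hBX k hk
      have h1 : p B ≤ ∑ B ∈ S, p B := Finset.single_le_sum (fun B _ => hp0 B) hB
      have h2 : v i (S.sup id) ≤ V := ((hv i).2.1 _ _ (Finset.subset_univ _)).trans (hVk i)
      have h3 := hs i ∅ (fun j => Or.inr (Finset.disjoint_empty_right _))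
      simp only [hw0, Finset.sum_empty] at h3
      have h4 := hown i
      unfold util at h4 ⊢
      linarith
  · intro Y hY
    have h1 := hopt Y hY
    have h2 : ∑ k, r k = SW v Z / 2 := by
      simp only [r, SW, Finset.sum_div]
    have h3 : SW v X = ∑ k, w k (A k) := rfl
    rw [h3]
    linarith
end

section
/- Fix ε > 0 and consider the auction with item set M = {1,2,3} and agents 1,2,3, where agent i's valuation is v_i(S) = 2+ε if M\{i} ⊆ S, v_i(S) = 1 if i ∈ S and M\{i} ⊄ S, and v_i(S) = 0 otherwise. Then every Combinatorial Walrasian Equilibrium (X, p) of this auction satisfies SW(X) ≤ 2+ε, while the allocation assigning item i to agent i has social welfare 3. Hence no CWE of this auction attains more than a (2+ε)/3 fraction of the optimal social welfare. -/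
open Finset

/-- In the 3-item, 3-agent market where agent `i` values `M \ {i}` at `2 + ε`,
any set containing `i` (but not `M \ {i}`) at `1`, and anything else at `0`, every CWE has
social welfare at most `2 + ε`, while allocating item `i` to agent `i` yields welfare `3`. -/
theorem cwe_gap_lower_bound (ε : ℝ) (hε : 0 < ε)
    (v : Fin 3 → Finset (Fin 3) → ℝ)
    (hv : ∀ (i : Fin 3) (S : Finset (Fin 3)),
      v i S = if Finset.univ.erase i ⊆ S then 2 + ε else if i ∈ S then 1 else 0) :
    (∀ (X : Fin 3 → Finset (Fin 3)) (p : Finset (Fin 3) → ℝ),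
        IsCWE v X p → SW v X ≤ 2 + ε) ∧
      SW v (fun i => {i}) = 3 := by
  have he : ∀ (i : Fin 3) (S : Finset (Fin 3)),
      Finset.univ.erase i ⊆ S ↔ ∀ j, j ≠ i → j ∈ S := by
    intro i S
    constructor
    · intro h j hj
      exact h (by simp [hj])
    · intro h j hj
      exact h j (by simpa using hj)
  refine ⟨?_, ?_⟩
  · intro X p hX
    obtain ⟨hA, -, hU⟩ := hX
    have hd : ∀ i j x, i ≠ j → x ∈ X i → x ∉ X j := fun i j x hij hx hx' =>
      Finset.disjoint_left.mp (hA i j hij) hx hx'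
    by_cases hbig : ∃ i, Finset.univ.erase i ⊆ X i
    · obtain ⟨i, hi⟩ := hbig
      have hz : ∀ j, j ≠ i → v j (X j) = 0 := by
        intro j hj
        have hjn : j ∉ X j := hd i j j hj.symm (hi (by simp [hj]))
        have hk : ∃ k : Fin 3, k ≠ i ∧ k ≠ j := by
          clear hjn hi; revert i j; decide
        obtain ⟨k, hki, hkj⟩ := hk
        have hkn : k ∉ X j := hd i j k hj.symm (hi (by simp [hki]))
        rw [hv, if_neg, if_neg hjn]
        intro h
        exact hkn (h (by simp [hkj]))
      unfold SW
      rw [Finset.sum_eq_single i (fun j _ hj => hz j hj) (by simp), hv, if_pos hi]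
    · push Not at hbig
      have hv' : ∀ i, v i (X i) = if i ∈ X i then 1 else 0 := fun i => by
        rw [hv, if_neg (hbig i)]
      by_cases hall : ∀ i, i ∈ X i
      · exfalso
        have hXe : X = fun i => {i} := by
          funext i
          ext x
          simp only [Finset.mem_singleton]
          constructor
          · intro hx
            by_contra hne
            exact hd x i x hne (hall x) hx
          · rintro rfl
            exact hall x
        subst hXe
        have hB : ∀ i : Fin 3, ({i} : Finset (Fin 3)) ∈ Bundles (fun i : Fin 3 => ({i} : Finset (Fin 3))) := by
          intro i
          simp [Bundles]
        have key : ∀ i j k : Fin 3, i ≠ j → i ≠ k → j ≠ k →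
            2 + ε - (p {j} + p {k}) ≤ 1 - p {i} := by
          intro i j k hij hik hjk
          have h := hU i {{j}, {k}} (by
            intro B hBm
            simp only [Finset.mem_insert, Finset.mem_singleton] at hBm
            rcases hBm with rfl | rfl <;> exact hB _)
          have hs : Finset.univ.erase i ⊆ (({{j}, {k}} : Finset (Finset (Fin 3))).sup id) := by
            clear h; revert i j k; decide
          have hi := hv' i
          simp only [Finset.mem_singleton, if_true] at hi
          have hne : ({j} : Finset (Fin 3)) ≠ {k} := by simpa using hjk
          unfold util own at h
          rw [hv i (Finset.sup _ _), if_pos hs, Finset.sum_pair hne] at h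
          simpa [hi] using h
        have k0 : ∀ i : Fin 3, p {i} ≤ 1 := by
          intro i
          have h := hU i ∅ (by simp)
          have hi := hv' i
          simp only [Finset.mem_singleton, if_true] at hi
          have h0 : v i ∅ = 0 := by
            rw [hv, if_neg, if_neg (by simp)]
            clear h hi; revert i; decide
          simp [util, own, hi, h0] at h
          linarith
        have a := key 0 1 2 (by decide) (by decide) (by decide)
        have b := key 1 0 2 (by decide) (by decide) (by decide)
        have c := key 2 0 1 (by decide) (by decide) (by decide)
        linarith [k0 0, k0 1, k0 2]
      · push Not at hall
        obtain ⟨i, hi⟩ := hall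
        have h1 : ∀ j, v j (X j) ≤ 1 := by
          intro j
          rw [hv']
          split_ifs <;> norm_num
        have h0 : v i (X i) = 0 := by rw [hv', if_neg hi]
        unfold SW
        rw [Fin.sum_univ_three]
        have a := h1 0
        have b := h1 1
        have c := h1 2
        fin_cases i <;> simp at h0 <;> linarith
  · have h : ∀ i : Fin 3, v i {i} = 1 := by
      intro i
      rw [hv, if_neg, if_pos (by simp)]
      revert i; decide
    simp [SW, h]
end

section
/- Fix m ≥ 2 and 0 < ε < m−1, and consider the auction with m items and two agents, where agent 1 is unit-demand with v_1(S) = 1+ε for every nonempty S ⊆ M and v_1(∅) = 0, and agent 2 is single-minded with v_2(M) = m and v_2(S) = 0 for every S ≠ M. Then every stable item-priced outcome (X, p) satisfies SW(X) ≤ 1+ε, while the optimal social welfare over all allocations equals m. Hence no stable item pricing attains more than a (1+ε)/m fraction of the optimal social welfare. -/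
open Finset

/-- A stable item-priced outcome: an allocation together with nonnegative item prices such that
every agent's bundle maximizes his quasilinear utility over all subsets of items. -/
def IsStableItemPricing {ι : Type} [Fintype ι] [DecidableEq ι] {n : ℕ}
    (v : Fin n → Finset ι → ℝ) (X : Fin n → Finset ι) (p : ι → ℝ) : Prop :=
  IsAlloc X ∧ (∀ j, 0 ≤ p j) ∧
    ∀ i : Fin n, ∀ S : Finset ι,
      v i S - ∑ j ∈ S, p j ≤ v i (X i) - ∑ j ∈ X i, p j

/-- With a unit-demand agent valuing any nonempty set at `1 + ε` and a
single-minded agent valuing the grand bundle at `m`, every stable item-priced outcome has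
welfare at most `1 + ε`, while the optimal welfare over all allocations equals `m`. -/
theorem item_pricing_gap_single_minded (m : ℕ) (hm : 2 ≤ m) (ε : ℝ) (hε : 0 < ε)
    (hε' : ε < (m : ℝ) - 1)
    (v : Fin 2 → Finset (Fin m) → ℝ)
    (hv1 : ∀ S : Finset (Fin m), v 0 S = if S = ∅ then 0 else 1 + ε)
    (hv2 : ∀ S : Finset (Fin m), v 1 S = if S = Finset.univ then (m : ℝ) else 0) :
    (∀ (X : Fin 2 → Finset (Fin m)) (p : Fin m → ℝ),
        IsStableItemPricing v X p → SW v X ≤ 1 + ε) ∧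
      IsGreatest {w : ℝ | ∃ Z : Fin 2 → Finset (Fin m), IsAlloc Z ∧ SW v Z = w} (m : ℝ) := by
  have h10 : (1 : Fin 2) ≠ 0 := by decide
  have hne : (Finset.univ : Finset (Fin m)) ≠ ∅ := by
    have : (⟨0, by omega⟩ : Fin m) ∈ (Finset.univ : Finset (Fin m)) := Finset.mem_univ _
    exact Finset.ne_empty_of_mem this
  have key : ∀ X : Fin 2 → Finset (Fin m), IsAlloc X → X 1 = Finset.univ → X 0 = ∅ := by
    intro X hX h1
    have h := hX 0 1 h10.symm
    rw [h1] at h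
    simpa [disjoint_iff] using h
  have hle : ∀ X : Fin 2 → Finset (Fin m), X 1 ≠ Finset.univ → SW v X ≤ 1 + ε := by
    intro X h1
    simp only [SW, Fin.sum_univ_two, hv1, hv2, if_neg h1]
    split_ifs <;> linarith
  have hfull : ∀ X : Fin 2 → Finset (Fin m), X 1 = Finset.univ → X 0 = ∅ → SW v X = m := by
    intro X h1 h0
    simp [SW, Fin.sum_univ_two, hv1, hv2, h1, h0]
  refine ⟨?_, ?_, ?_⟩
  · rintro X p ⟨hX, hp, hs⟩
    by_cases h1 : X 1 = Finset.univ
    · exfalso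
      have h0 := key X hX h1
      have ha : ∀ j : Fin m, 1 + ε ≤ p j := by
        intro j
        have := hs 0 {j}
        simp [hv1, h0] at this
        linarith
      have hb := hs 1 ∅
      simp only [hv2, h1, if_neg hne.symm, if_true, Finset.sum_empty] at hb
      have hc : ∑ _j : Fin m, (1 + ε) ≤ ∑ j, p j := Finset.sum_le_sum fun j _ => ha j
      simp at hc
      have hm' : (0 : ℝ) < m := by positivity
      nlinarith
    · exact hle X h1
  · refine ⟨fun i => if i = 0 then ∅ else Finset.univ, ?_, ?_⟩
    · intro i j hij
      fin_cases i <;> fin_cases j <;> simp_all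
    · exact hfull _ (by simp) (by simp)
  · rintro w ⟨Z, hZ, rfl⟩
    by_cases h1 : Z 1 = Finset.univ
    · exact (hfull Z h1 (key Z hZ h1)).le
    · have := hle Z h1
      linarith
end

section
/- Fix m ≥ 4 and 0 < δ < 1/(2(m−1)), and consider the auction with m items and two agents, where agent 1 is unit-demand with v_1(S) = 1/2 − δ for every nonempty S and v_1(∅) = 0, and agent 2 has the fractionally subadditive valuation v_2(S) = max(1, |S|/2) for nonempty S and v_2(∅) = 0. Then every stable item-priced outcome (X, p) allocates at most two items in total (|X_1| + |X_2| ≤ 2) and satisfies SW(X) ≤ 3/2 − δ, while the optimal social welfare over all allocations equals m/2. Hence the welfare loss of stable item pricing is linear in m. -/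
open Finset

/-- With a unit-demand agent valuing any nonempty set at `1/2 − δ` and an XOS
agent with `v₂(S) = max(1, |S|/2)`, every stable item-priced outcome allocates at most two
items in total and has welfare at most `3/2 − δ`, while the optimal welfare equals `m/2`. -/
theorem item_pricing_gap_xos (m : ℕ) (hm : 4 ≤ m) (δ : ℝ) (hδ : 0 < δ)
    (hδ' : δ < 1 / (2 * ((m : ℝ) - 1)))
    (v : Fin 2 → Finset (Fin m) → ℝ)
    (hv1 : ∀ S : Finset (Fin m), v 0 S = if S = ∅ then 0 else 1 / 2 - δ)
    (hv2 : ∀ S : Finset (Fin m), v 1 S = if S = ∅ then 0 else max 1 ((S.card : ℝ) / 2)) :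
    (∀ (X : Fin 2 → Finset (Fin m)) (p : Fin m → ℝ),
        IsStableItemPricing v X p →
          (X 0).card + (X 1).card ≤ 2 ∧ SW v X ≤ 3 / 2 - δ) ∧
      IsGreatest {w : ℝ | ∃ Z : Fin 2 → Finset (Fin m), IsAlloc Z ∧ SW v Z = w}
        ((m : ℝ) / 2) := by
  have hmR : (4 : ℝ) ≤ m := by exact_mod_cast hm
  have hδm : δ * (2 * ((m : ℝ) - 1)) < 1 := by
    rwa [lt_div_iff₀ (by linarith)] at hδ'
  have hδ6 : δ < 1 / 6 := by nlinarith
  have hv2e : v 1 ∅ = 0 := by simp [hv2]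
  have hv1e : v 0 ∅ = 0 := by simp [hv1]
  have hv1n : ∀ S : Finset (Fin m), S ≠ ∅ → v 0 S = 1 / 2 - δ := by
    intro S hS; simp [hv1, hS]
  have hv2n : ∀ S : Finset (Fin m), S ≠ ∅ → v 1 S = max 1 ((S.card : ℝ) / 2) := by
    intro S hS; simp [hv2, hS]
  have hSW : ∀ X : Fin 2 → Finset (Fin m), SW v X = v 0 (X 0) + v 1 (X 1) := by
    intro X; simp [SW, Fin.sum_univ_two]
  refine ⟨?_, ?_, ?_⟩
  · rintro X p ⟨hX, hp, hst⟩
    have hd : Disjoint (X 0) (X 1) := hX 0 1 (by decide)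
    have h0 := hst 0
    have h1 := hst 1
    rw [hSW]
    generalize X 0 = A at *
    generalize X 1 = B at *
    have hv2le : v 1 B ≤ max 1 ((B.card : ℝ) / 2) := by
      rw [hv2]; split_ifs
      · positivity
      · exact le_rfl
    have hA0 : A.card ≤ 1 := by
      by_contra hA
      have hA2 : 2 ≤ A.card := by omega
      have hz : ∀ a ∈ A, p a = 0 := by
        intro a ha
        have hne : A.erase a ≠ ∅ := by
          intro h
          have := Finset.card_erase_of_mem ha
          rw [h] at this; simp at this; omega
        have hs := h0 (A.erase a)
        rw [hv1n _ hne, hv1n A (Finset.ne_empty_of_mem ha)] at hs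
        have := Finset.add_sum_erase A p ha
        linarith [hp a]
      have hs0 : ∑ a ∈ A, p a = 0 := Finset.sum_eq_zero hz
      have hAn : A ≠ ∅ := by rintro rfl; simp at hA2
      have hA2R : (2 : ℝ) ≤ A.card := by exact_mod_cast hA2
      by_cases hB : B = ∅
      · have hs := h1 A
        rw [hB, hv2e, hs0, hv2n A hAn] at hs
        simp at hs
        linarith [le_max_left (1 : ℝ) ((A.card : ℝ) / 2), hs.1]
      · have hs := h1 (A ∪ B)
        have hne : A ∪ B ≠ ∅ := by simp [hB]
        rw [Finset.sum_union hd, hs0, hv2n _ hne, Finset.card_union_of_disjoint hd] at hs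
        have hb1 : (1 : ℝ) ≤ B.card := by
          exact_mod_cast Finset.card_pos.mpr (Finset.nonempty_iff_ne_empty.mpr hB)
        push_cast at hs
        have h3 := le_max_right (1 : ℝ) (((A.card : ℝ) + B.card) / 2)
        rcases max_cases 1 ((B.card : ℝ) / 2) with h | h <;> linarith
    have hBm : B.card ≤ m := by simpa using Finset.card_le_univ B
    have hBmR : (B.card : ℝ) ≤ m := by exact_mod_cast hBm
    by_cases hA : A = ∅
    · have hlow : ∀ j, 1 / 2 - δ ≤ p j := by
        intro j
        have hs := h0 {j}
        rw [hA, hv1e, hv1n _ (Finset.singleton_ne_empty j)] at hs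
        simp only [Finset.sum_singleton, Finset.sum_empty] at hs
        linarith
      have hB2 : B.card ≤ 2 := by
        by_contra hB
        have hB3 : 3 ≤ B.card := by omega
        have hB3R : (3 : ℝ) ≤ B.card := by exact_mod_cast hB3
        obtain ⟨c, hc⟩ := Finset.card_pos.mp (show 0 < B.card by omega)
        have hs := h1 {c}
        rw [hv2n _ (Finset.singleton_ne_empty c), Finset.sum_singleton] at hs
        have h3 := le_max_left (1 : ℝ) (((({c} : Finset (Fin m)).card : ℝ)) / 2)
        have h4 := Finset.add_sum_erase B p hc
        have h5 := Finset.card_nsmul_le_sum (B.erase c) p (1 / 2 - δ) (fun j _ => hlow j)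
        rw [Finset.card_erase_of_mem hc, nsmul_eq_mul, Nat.cast_sub (by omega)] at h5
        push_cast at h5
        rw [max_eq_right (by linarith)] at hv2le
        nlinarith
      have hB2R : (B.card : ℝ) ≤ 2 := by exact_mod_cast hB2
      refine ⟨by simp [hA, hB2], ?_⟩
      rw [hA, hv1e]
      rw [max_eq_left (by linarith)] at hv2le
      linarith
    · have hA1 : A.card = 1 := by
        have := Finset.card_pos.mpr (Finset.nonempty_iff_ne_empty.mpr hA)
        omega
      obtain ⟨a, rfl⟩ := Finset.card_eq_one.mp hA1
      have hpa : p a ≤ 1 / 2 - δ := by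
        have hs := h0 ∅
        rw [hv1e, hv1n _ hA] at hs
        simp only [Finset.sum_singleton, Finset.sum_empty] at hs
        linarith
      have hB1 : B.card ≤ 1 := by
        by_contra hB
        have hB2R : (2 : ℝ) ≤ B.card := by exact_mod_cast (show 2 ≤ B.card by omega)
        have hs := h1 ({a} ∪ B)
        have hne : {a} ∪ B ≠ ∅ := by simp
        rw [Finset.sum_union hd, hv2n _ hne, Finset.card_union_of_disjoint hd,
          Finset.sum_singleton, hA1] at hs
        push_cast at hs
        have h3 := le_max_right (1 : ℝ) ((1 + (B.card : ℝ)) / 2)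
        rw [max_eq_right (by linarith)] at hv2le
        linarith
      have hB1R : (B.card : ℝ) ≤ 1 := by exact_mod_cast hB1
      refine ⟨by omega, ?_⟩
      rw [hv1n _ hA]
      rw [max_eq_left (by linarith)] at hv2le
      linarith
  · refine ⟨fun i => if i = 0 then ∅ else Finset.univ, ?_, ?_⟩
    · intro i j hij
      fin_cases i <;> fin_cases j <;> simp_all
    · rw [hSW]
      have : (Finset.univ : Finset (Fin m)) ≠ ∅ := by
        intro h
        have := congrArg Finset.card h
        simp at this
        omega
      simp only [if_true, one_ne_zero, if_false, hv1e, hv2n _ this, Finset.card_univ, Fintype.card_fin]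
      rw [max_eq_right (by linarith)]; ring
  · rintro w ⟨Z, hZ, rfl⟩
    rw [hSW]
    have hd : Disjoint (Z 0) (Z 1) := hZ 0 1 (by decide)
    have hc : (Z 0).card + (Z 1).card ≤ m := by
      rw [← Finset.card_union_of_disjoint hd]
      simpa using Finset.card_le_univ (Z 0 ∪ Z 1)
    have hcR : ((Z 0).card : ℝ) + (Z 1).card ≤ m := by exact_mod_cast hc
    have hn : (0 : ℝ) ≤ (Z 0).card := by positivity
    have h2 : v 1 (Z 1) ≤ max 1 (((Z 1).card : ℝ) / 2) := by
      rw [hv2]; split_ifs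
      · positivity
      · exact le_rfl
    by_cases hA : Z 0 = ∅
    · rw [hA, hv1e]
      rcases max_cases 1 (((Z 1).card : ℝ) / 2) with h | h <;> linarith
    · rw [hv1n _ hA]
      have : (1 : ℝ) ≤ (Z 0).card := by
        exact_mod_cast Finset.card_pos.mpr (Finset.nonempty_iff_ne_empty.mpr hA)
      rcases max_cases 1 (((Z 1).card : ℝ) / 2) with h | h <;> linarith
end

section
/- Let Γ be a partition of the item set M into nonempty bundles with nonnegative bundle prices p, and let X = (X_0, X_1, …, X_n) be an allocation whose nonempty bundles all belong to Γ, such that the assignment giving each agent i the set {X_i} (or ∅ if X_i = ∅) is stable under p. For any constant σ > 0, let p^σ be the prices obtained by adding σ to the price of every bundle of Γ, and define X^σ_i = X_i if v_i(X_i) ≥ p(X_i) + σ and X^σ_i = ∅ otherwise. Then the assignment giving each agent i the set {X^σ_i} (or ∅ if X^σ_i = ∅) is stable under the prices p^σ. -/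
open Finset

/-- A partition of the item set into nonempty, pairwise disjoint bundles covering all items. -/
def IsPartition {ι : Type} [Fintype ι] [DecidableEq ι] (Γ : Finset (Finset ι)) : Prop :=
  (∀ B ∈ Γ, B ≠ ∅) ∧ (∀ B ∈ Γ, ∀ C ∈ Γ, B ≠ C → Disjoint B C) ∧ Γ.sup id = Finset.univ

/-- Claim on uniform price increases: if the assignment giving each agent `i`
the set `{Xᵢ}` (or `∅`) is stable under prices `p`, then after adding `σ > 0` to every bundle
price and discarding the agents whose value drops below the new price, the resulting
assignment is stable under the shifted prices. -/
theorem stable_after_uniform_price_increase {ι : Type} [Fintype ι] [DecidableEq ι] (n : ℕ)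
    (v : Fin n → Finset ι → ℝ) (hv : ∀ i, ValidVal (v i))
    (Γ : Finset (Finset ι)) (hΓ : IsPartition Γ)
    (p : Finset ι → ℝ) (hp : ∀ B ∈ Γ, 0 ≤ p B)
    (X : Fin n → Finset ι) (hXΓ : ∀ i, X i ≠ ∅ → X i ∈ Γ) (hX : IsAlloc X)
    (hstable : ∀ i : Fin n, ∀ S ⊆ Γ, util (v i) p S ≤ util (v i) p (own X i))
    (σ : ℝ) (hσ : 0 < σ)
    (Xσ : Fin n → Finset ι)
    (hXσ : ∀ i, Xσ i = if X i ≠ ∅ ∧ p (X i) + σ ≤ v i (X i) then X i else ∅) :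
    ∀ i : Fin n, ∀ S ⊆ Γ,
      util (v i) (fun B => p B + σ) S ≤ util (v i) (fun B => p B + σ) (own Xσ i) := by
  intro i S hS
  have hv0 : v i ∅ = 0 := (hv i).2.2
  have hS1 := hstable i S hS
  have hcard : util (v i) (fun B => p B + σ) S = util (v i) p S - (S.card : ℝ) * σ := by
    simp only [util, Finset.sum_add_distrib, Finset.sum_const, nsmul_eq_mul]
    ring
  have hx := hXσ i
  have hR : 0 ≤ util (v i) (fun B => p B + σ) (own Xσ i) ∧
      util (v i) p (own X i) - σ ≤ util (v i) (fun B => p B + σ) (own Xσ i) := by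
    by_cases h0 : X i = ∅
    · have hx' : Xσ i = ∅ := by rw [hx, if_neg (fun h => h.1 h0)]
      simp [util, own, h0, hx', hv0]
      exact hσ.le
    · by_cases h1 : p (X i) + σ ≤ v i (X i)
      · have hx' : Xσ i = X i := by rw [hx, if_pos ⟨h0, h1⟩]
        simp only [util, own, hx', if_neg h0, Finset.sup_singleton, Finset.sum_singleton, id]
        constructor <;> linarith
      · have hx' : Xσ i = ∅ := by rw [hx, if_neg (fun h => h1 h.2)]
        simp only [util, own, hx', if_neg h0, if_true, Finset.sup_singleton,
          Finset.sum_singleton, id, Finset.sup_empty, Finset.sum_empty, Finset.bot_eq_empty, hv0]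
        constructor <;> linarith
  rcases S.eq_empty_or_nonempty with rfl | hne
  · have : util (v i) (fun B => p B + σ) ∅ = 0 := by simp [util, hv0]
    rw [this]
    exact hR.1
  · have h1 : (1 : ℝ) ≤ S.card := by exact_mod_cast hne.card_pos
    have h2 : σ ≤ (S.card : ℝ) * σ := by nlinarith
    rw [hcard]
    linarith [hR.2]
end

section
/- Let (X, p) be a Combinatorial Walrasian Equilibrium with k ≥ 1 allocated agents (k = |{i ≥ 1 : X_i ≠ ∅}|) and social welfare SW_0 = Σ_{i=1}^n v_i(X_i) > 0. Let ℓ = ⌈log₂(2k)⌉ and, for t ∈ {1, …, ℓ+1}, set σ_t = 2^{t−1}·SW_0/(2k), W_t = {i : X_i ≠ ∅ and v_i(X_i) ≥ p(X_i) + σ_t}, SW_t = Σ_{i∈W_t} v_i(X_i), and REV_t = Σ_{i∈W_t} (p(X_i) + σ_t); also let REV_0 = Σ_{i : X_i ≠ ∅} p(X_i). Then there exists t ∈ {0, 1, …, ℓ+1} such that REV_t ≥ SW_0/(8ℓ). -/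
open Finset

/-- key revenue lemma: for a CWE `(X, p)` with `k ≥ 1` allocated agents and
positive social welfare `SW₀`, with `ℓ = ⌈log₂(2k)⌉`, `σ_t = 2^(t−1)·SW₀/(2k)`,
`W_t = {i : Xᵢ ≠ ∅ and vᵢ(Xᵢ) ≥ p(Xᵢ) + σ_t}` and the corresponding revenues `REV_t`,
there is some `t ∈ {0, 1, …, ℓ+1}` with `REV_t ≥ SW₀/(8ℓ)`. -/
theorem exists_price_shift_with_high_revenue {ι : Type} [Fintype ι] [DecidableEq ι] (n : ℕ)
    (v : Fin n → Finset ι → ℝ) (hv : ∀ i, ValidVal (v i))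
    (X : Fin n → Finset ι) (p : Finset ι → ℝ) (hcwe : IsCWE v X p)
    (k : ℕ) (hk : k = (Finset.univ.filter (fun i : Fin n => X i ≠ ∅)).card) (hk1 : 1 ≤ k)
    (hSW : 0 < SW v X)
    (ℓ : ℕ) (hℓ : ℓ = Nat.clog 2 (2 * k))
    (σ : ℕ → ℝ) (hσ : ∀ t : ℕ, σ t = 2 ^ (t - 1) * SW v X / (2 * k))
    (W : ℕ → Finset (Fin n))
    (hW : ∀ t : ℕ, W t =
      Finset.univ.filter (fun i : Fin n => X i ≠ ∅ ∧ p (X i) + σ t ≤ v i (X i)))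
    (REV : ℕ → ℝ)
    (hREV0 : REV 0 = ∑ i ∈ Finset.univ.filter (fun i : Fin n => X i ≠ ∅), p (X i))
    (hREV : ∀ t : ℕ, 1 ≤ t → REV t = ∑ i ∈ W t, (p (X i) + σ t)) :
    ∃ t ≤ ℓ + 1, REV t ≥ SW v X / (8 * (ℓ : ℝ)) := by
  set A := Finset.univ.filter (fun i : Fin n => X i ≠ ∅) with hA
  have hp : ∀ i ∈ A, 0 ≤ p (X i) := by
    intro i hi
    apply hcwe.2.1
    simp only [hA, Finset.mem_filter, Finset.mem_univ, true_and] at hi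
    simp [Bundles, hi]
  have hSA : ∑ i ∈ A, v i (X i) = SW v X := by
    unfold SW
    apply Finset.sum_subset (Finset.subset_univ _)
    intro i _ hi
    simp only [hA, Finset.mem_filter, Finset.mem_univ, true_and, not_not] at hi
    rw [hi]
    exact (hv i).2.2
  have hk0 : (0 : ℝ) < k := by exact_mod_cast hk1
  have hσpos : ∀ t, 0 < σ t := by
    intro t
    rw [hσ]
    positivity
  have hσs : ∀ m : ℕ, σ (m + 1 + 1) = 2 * σ (m + 1) := by
    intro m
    rw [hσ, hσ]
    simp only [Nat.add_sub_cancel]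
    ring
  have hσ1 : (k : ℝ) * σ 1 = SW v X / 2 := by
    rw [hσ]
    field_simp
    simp
  have hℓ1 : 1 ≤ ℓ := by
    rw [hℓ]
    exact Nat.clog_pos (by norm_num) (by omega)
  have hσl : SW v X ≤ σ (ℓ + 1) := by
    have h1 : 2 * k ≤ 2 ^ ℓ := by
      rw [hℓ]
      exact Nat.le_pow_clog (by norm_num) _
    have h2 : (2 * k : ℝ) ≤ 2 ^ ℓ := by exact_mod_cast h1
    rw [hσ, Nat.add_sub_cancel, le_div_iff₀ (by positivity)]
    nlinarith
  have key : ∀ u : ℝ, ∀ m : ℕ, min u (σ (m + 1)) ≤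
      σ 1 + ∑ t ∈ Finset.range m, (if σ (t + 1) ≤ u then σ (t + 1) else 0) := by
    intro u m
    induction m with
    | zero => simp
    | succ m ih =>
      rw [Finset.sum_range_succ, hσs]
      have := hσpos (m + 1)
      split_ifs with h
      · rw [min_eq_right h] at ih
        have := min_le_right u (2 * σ (m + 1))
        linarith
      · rw [min_eq_left (not_le.mp h).le] at ih
        have := min_le_left u (2 * σ (m + 1))
        linarith
  have hu : ∀ i ∈ A, v i (X i) - p (X i) ≤
      σ 1 + ∑ t ∈ Finset.range ℓ,
        (if σ (t + 1) ≤ v i (X i) - p (X i) then σ (t + 1) else 0) := by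
    intro i hi
    have h1 := key (v i (X i) - p (X i)) ℓ
    have h2 : v i (X i) ≤ SW v X :=
      Finset.single_le_sum (f := fun i => v i (X i)) (fun j _ => (hv j).1 _) (Finset.mem_univ i)
    have h3 := hp i hi
    rwa [min_eq_left (by linarith)] at h1
  have hR : ∀ t, ∑ i ∈ A, (if σ (t + 1) ≤ v i (X i) - p (X i) then σ (t + 1) else 0)
      ≤ REV (t + 1) := by
    intro t
    rw [hREV _ (by omega), hW, ← Finset.filter_filter, ← Finset.sum_filter]
    have he : A.filter (fun i => σ (t + 1) ≤ v i (X i) - p (X i)) =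
        A.filter (fun i => p (X i) + σ (t + 1) ≤ v i (X i)) := by
      apply Finset.filter_congr
      intro i _
      constructor <;> intro h <;> linarith
    rw [he]
    apply Finset.sum_le_sum
    intro i hi
    have := hp i (Finset.mem_filter.mp hi).1
    linarith
  have hsum := Finset.sum_le_sum hu
  rw [Finset.sum_sub_distrib, hSA, ← hREV0, Finset.sum_add_distrib, Finset.sum_const, ← hk,
    nsmul_eq_mul, hσ1, Finset.sum_comm] at hsum
  have hsum2 := hsum.trans (add_le_add_right (Finset.sum_le_sum fun t _ => hR t) _)
  by_contra! hcon
  have h0 := hcon 0 (by omega)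
  have h1 : ∑ t ∈ Finset.range ℓ, REV (t + 1) ≤ ∑ t ∈ Finset.range ℓ, SW v X / (8 * (ℓ : ℝ)) := by
    apply Finset.sum_le_sum
    intro t ht
    have := Finset.mem_range.mp ht
    exact (hcon (t + 1) (by omega)).le
  have hl : (1 : ℝ) ≤ ℓ := by exact_mod_cast hℓ1
  rw [Finset.sum_const, Finset.card_range, nsmul_eq_mul] at h1
  have h2 : (ℓ : ℝ) * (SW v X / (8 * (ℓ : ℝ))) = SW v X / 8 := by
    field_simp
  have h3 : SW v X / (8 * (ℓ : ℝ)) ≤ SW v X / 8 := by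
    apply div_le_div_of_nonneg_left hSW.le (by norm_num) (by linarith)
  linarith
end

section
/- For every auction with n ≥ 1 agents having nonnegative, monotone, normalized valuations, and every allocation Y = (Y_0, Y_1, …, Y_n), there exists a Combinatorial Walrasian Equilibrium (X, p) whose revenue is at least SW(Y)/(16·⌈log₂(2n)⌉); i.e., one can find a CWE extracting revenue within an O(log n) factor of the social welfare of Y. -/
open Finset

section Core
variable {α κ : Type} [Fintype α] [DecidableEq α] [Fintype κ] [DecidableEq κ]

def CSt (r : ℝ) (A : α → Finset κ) (P : α → ℝ) : Prop :=
  (∀ i j, i ≠ j → Disjoint (A i) (A j)) ∧ (∀ i, r * (#(A i) : ℝ) ≤ P i) ∧ (∀ i, A i = ∅ → P i = 0)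

def COu (w : α → Finset κ → ℝ) (r : ℝ) (A : α → Finset κ) (P : α → ℝ) (i : α)
    (S : Finset α) (U : Finset κ) : ℝ :=
  w i (S.biUnion A ∪ U) - ∑ s ∈ S, P s - r * (#U : ℝ)

def CVal (A : α → Finset κ) (U : Finset κ) : Prop := ∀ i, Disjoint (A i) U

def CSat (w : α → Finset κ → ℝ) (r ε : ℝ) (A : α → Finset κ) (P : α → ℝ) (i : α) : Prop :=
  ∀ S U, CVal A U → COu w r A P i S U ≤ w i (A i) - P i + ε

def newA (A : α → Finset κ) (j : α) (S : Finset α) (U : Finset κ) : α → Finset κ :=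
  fun i => if i = j then S.biUnion A ∪ U else if i ∈ S then ∅ else A i

def newP (r ε : ℝ) (P : α → ℝ) (j : α) (S : Finset α) (U : Finset κ) : α → ℝ :=
  fun i => (if i = j then ∑ s ∈ S, P s + r * (#U : ℝ) + ε else 0) + (if i ∈ S then 0 else P i)

lemma newP_sum (r ε : ℝ) (P : α → ℝ) (j : α) (S : Finset α) (U : Finset κ) (T : Finset α) :
    ∑ i ∈ T, newP r ε P j S U i =
      (if j ∈ T then ∑ s ∈ S, P s + r * (#U : ℝ) + ε else 0) + ∑ i ∈ T \ S, P i := by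
  unfold newP
  rw [Finset.sum_add_distrib, Finset.sum_ite_eq']
  congr 1
  rw [Finset.sdiff_eq_filter, Finset.sum_filter]
  refine Finset.sum_congr rfl fun i _ => ?_
  by_cases h : i ∈ S <;> simp [h]

lemma core_map (w : α → Finset κ → ℝ) (r ε : ℝ) (hε : 0 ≤ ε) (A : α → Finset κ)
    (P : α → ℝ) (j : α) (hAj : A j = ∅) (S : Finset α) (U : Finset κ) (hU : CVal A U)
    (S' : Finset α) (U' : Finset κ) (hU' : CVal (newA A j S U) U') :
    ∃ S'' U'', CVal A U'' ∧ ∀ i,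
      COu w r (newA A j S U) (newP r ε P j S U) i S' U' ≤ COu w r A P i S'' U'' := by
  have hj := hU' j
  simp only [newA, if_true, Finset.disjoint_union_left, Finset.disjoint_biUnion_left] at hj
  have hv : CVal A U' := by
    intro i
    by_cases h1 : i = j
    · subst h1; simp [hAj]
    by_cases h2 : i ∈ S
    · exact hj.1 i h2
    · have := hU' i
      simpa [newA, h1, h2] using this
  by_cases hjS : j ∈ S'
  · refine ⟨S' ∪ S, U ∪ U', fun i => Finset.disjoint_union_right.2 ⟨hU i, hv i⟩, fun i => ?_⟩
    have e1 : S'.biUnion (newA A j S U) ∪ U' = (S' ∪ S).biUnion A ∪ (U ∪ U') := by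
      ext x
      simp only [newA, Finset.mem_union, Finset.mem_biUnion]
      constructor
      · rintro (⟨a, ha, hx⟩ | hx)
        · split_ifs at hx with h1 h2
          · simp only [Finset.mem_union, Finset.mem_biUnion] at hx
            grind
          · simp at hx
          · grind
        · grind
      · rintro (⟨a, ha, hx⟩ | hx | hx)
        · by_cases h1 : a = j
          · subst h1; simp [hAj] at hx
          by_cases h2 : a ∈ S
          · left; exact ⟨j, hjS, by simp; left; exact ⟨a, h2, hx⟩⟩
          · left; refine ⟨a, by grind, by simpa [h1, h2] using hx⟩
        · left; exact ⟨j, hjS, by simp [hx]⟩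
        · right; exact hx
    have e2 : ∑ i ∈ S' ∪ S, P i = ∑ i ∈ S, P i + ∑ i ∈ S' \ S, P i := by
      rw [← Finset.sdiff_union_self_eq_union, Finset.sum_union Finset.sdiff_disjoint]; ring
    have e3 : (#(U ∪ U') : ℝ) = #U + #U' := by
      rw [Finset.card_union_of_disjoint hj.2]; push_cast; ring
    simp only [COu, e1, newP_sum, e2, e3, if_pos hjS]
    linarith
  · refine ⟨S' \ S, U', hv, fun i => ?_⟩
    have e1 : S'.biUnion (newA A j S U) = (S' \ S).biUnion A := by
      ext x
      simp only [newA, Finset.mem_biUnion]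
      constructor
      · rintro ⟨a, ha, hx⟩
        split_ifs at hx with h1 h2
        · grind
        · simp at hx
        · grind
      · rintro ⟨a, ha, hx⟩
        refine ⟨a, by grind, ?_⟩
        rw [if_neg (by grind), if_neg (by grind)]; exact hx
    simp only [COu, e1, newP_sum, if_neg hjS]
    linarith

def Pot (r : ℝ) (A : α → Finset κ) (P : α → ℝ) : ℝ := ∑ i, (P i - r * (#(A i) : ℝ))

lemma core_step (w : α → Finset κ → ℝ) (hw : ∀ i, w i ∅ = 0) (r ε : ℝ) (hr : 0 ≤ r) (hε : 0 < ε)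
    (A : α → Finset κ) (P : α → ℝ) (hst : CSt r A P) (hs : ∀ i, A i ≠ ∅ → CSat w r ε A P i)
    (j : α) (hj : ¬ CSat w r ε A P j) :
    ∃ A' P', CSt r A' P' ∧ (∀ i, A' i ≠ ∅ → CSat w r ε A' P' i) ∧ Pot r A P + ε ≤ Pot r A' P' := by
  classical
  obtain ⟨hd, hp, h0⟩ := hst
  have hAj : A j = ∅ := by by_contra h; exact hj (hs j h)
  have hPj := h0 j hAj
  have hPn : ∀ i, 0 ≤ P i := fun i => le_trans (by positivity) (hp i)
  simp only [CSat, not_forall] at hj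
  obtain ⟨S0, U0, hU0, hlt0⟩ := hj
  obtain ⟨⟨S, U⟩, hmem, hmax⟩ := Finset.exists_max_image
    ((Finset.univ : Finset (Finset α × Finset κ)).filter (fun q => CVal A q.2))
    (fun q => COu w r A P j q.1 q.2) ⟨(S0, U0), by simpa using hU0⟩
  have hU : CVal A U := by simpa using hmem
  have hmx : ∀ T V, CVal A V → COu w r A P j T V ≤ COu w r A P j S U := fun T V hV =>
    hmax (T, V) (by simpa using hV)
  have hgt : ε < COu w r A P j S U := by
    have := hmx S0 U0 hU0
    rw [hAj, hw, hPj] at hlt0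
    linarith
  have hcard : (#(S.biUnion A ∪ U) : ℝ) = ∑ i ∈ S, (#(A i) : ℝ) + #U := by
    rw [Finset.card_union_of_disjoint, Finset.card_biUnion]
    · push_cast; rfl
    · intro a _ b _ hab; exact hd a b hab
    · rw [Finset.disjoint_biUnion_left]; exact fun i _ => hU i
  have hPj' : newP r ε P j S U j = ∑ s ∈ S, P s + r * (#U : ℝ) + ε := by
    simp [newP, hPj]
  have hAj' : newA A j S U j = S.biUnion A ∪ U := by simp [newA]
  refine ⟨newA A j S U, newP r ε P j S U, ⟨?_, ?_, ?_⟩, ?_, ?_⟩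
  · have key : ∀ b, b ≠ j → Disjoint (newA A j S U j) (newA A j S U b) := by
      intro b hb
      rw [hAj']
      simp only [newA, if_neg hb]
      split_ifs with h
      · simp
      · rw [Finset.disjoint_union_left, Finset.disjoint_biUnion_left]
        exact ⟨fun i hi => hd i b (by rintro rfl; exact h hi), (hU b).symm⟩
    intro a b hab
    by_cases ha : a = j
    · subst ha; exact key b hab.symm
    by_cases hb : b = j
    · subst hb; exact (key a ha).symm
    simp only [newA, if_neg ha, if_neg hb]
    split_ifs <;> simp [hd a b hab]
  · intro i
    by_cases hi : i = j
    · subst hi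
      rw [hPj', hAj', hcard]
      have : r * ∑ i ∈ S, (#(A i) : ℝ) ≤ ∑ s ∈ S, P s := by
        rw [Finset.mul_sum]; exact Finset.sum_le_sum fun i _ => hp i
      nlinarith
    · simp only [newA, newP, if_neg hi]
      split_ifs
      · simp
      · simpa using hp i
  · intro i h
    by_cases hi : i = j
    · subst hi
      exfalso
      rw [hAj'] at h
      rw [COu, h, hw] at hgt
      have : 0 ≤ ∑ s ∈ S, P s := Finset.sum_nonneg fun i _ => hPn i
      have : 0 ≤ r * (#U : ℝ) := by positivity
      linarith
    · simp only [newA, newP, if_neg hi] at h ⊢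
      split_ifs at h ⊢ with h2
      · simp
      · simpa using h0 i h
  · intro i hi S' U' hU'
    obtain ⟨S'', U'', hv, hle⟩ := core_map w r ε hε.le A P j hAj S U hU S' U' hU'
    refine (hle i).trans ?_
    by_cases hij : i = j
    · subst hij
      refine (hmx _ _ hv).trans ?_
      rw [hPj', hAj', COu]; linarith
    · simp only [newA, if_neg hij] at hi
      by_cases h2 : i ∈ S
      · simp [h2] at hi
      · rw [if_neg h2] at hi
        have := hs i hi S'' U'' hv
        simpa [newA, newP, hij, h2] using this
  · have e1 : ∑ i, newP r ε P j S U i = ∑ i, P i + r * (#U : ℝ) + ε := by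
      rw [newP_sum, if_pos (Finset.mem_univ _), ← Finset.sum_sdiff (Finset.subset_univ S)]; ring
    have e2 : ∑ i, (#(newA A j S U i) : ℝ) = ∑ i, (#(A i) : ℝ) + #U := by
      have : ∀ i, (#(newA A j S U i) : ℝ) = newP 1 0 (fun i => (#(A i) : ℝ)) j S U i := by
        intro i
        unfold newA newP
        by_cases hi : i = j
        · subst hi; simp [hcard, hAj]
        · by_cases h2 : i ∈ S <;> simp [hi, h2]
      simp_rw [this]
      rw [newP_sum, if_pos (Finset.mem_univ _), ← Finset.sum_sdiff (Finset.subset_univ S)]; ring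
    simp only [Pot, Finset.sum_sub_distrib, ← Finset.mul_sum, e1, e2]
    linarith

lemma core_eps (w : α → Finset κ → ℝ) (hw : ∀ i, w i ∅ = 0) (r ε : ℝ) (hr : 0 ≤ r) (hε : 0 < ε) :
    ∃ (A : α → Finset κ) (P : α → ℝ), CSt r A P ∧ ∀ i, CSat w r ε A P i := by
  by_contra hcon
  push Not at hcon
  have hm : ∀ m : ℕ, ∃ (A : α → Finset κ) (P : α → ℝ), CSt r A P ∧
      (∀ i, A i ≠ ∅ → CSat w r ε A P i) ∧ m * ε ≤ Pot r A P := by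
    intro m
    induction m with
    | zero => exact ⟨fun _ => ∅, fun _ => 0, ⟨by simp, by simp, by simp⟩, by simp, by simp [Pot]⟩
    | succ m ih =>
      obtain ⟨A, P, hst, hs, hp⟩ := ih
      obtain ⟨j, hj⟩ := hcon A P hst
      obtain ⟨A', P', h1, h2, h3⟩ := core_step w hw r ε hr hε A P hst hs j hj
      exact ⟨A', P', h1, h2, by push_cast; linarith⟩
  obtain ⟨m, hmm⟩ := exists_nat_gt ((∑ i : α, (∑ T, |w i T| + ε)) / ε)
  obtain ⟨A, P, hst, hs, hp⟩ := hm m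
  rw [div_lt_iff₀ hε] at hmm
  have : Pot r A P ≤ ∑ i : α, (∑ T, |w i T| + ε) := by
    refine Finset.sum_le_sum fun i _ => ?_
    have h1 : 0 ≤ r * (#(A i) : ℝ) := by positivity
    have h2 : w i (A i) ≤ ∑ T, |w i T| := (le_abs_self _).trans
      (Finset.single_le_sum (f := fun T => |w i T|) (fun _ _ => abs_nonneg _) (Finset.mem_univ (A i)))
    by_cases hi : A i = ∅
    · have h3 := hst.2.2 i hi
      rw [hi, hw] at h2
      linarith
    · have := hs i hi ∅ ∅ (fun _ => by simp)
      simp [COu, hw] at this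
      linarith
  linarith

lemma core (w : α → Finset κ → ℝ) (hw : ∀ i, w i ∅ = 0) (r : ℝ) (hr : 0 ≤ r) :
    ∃ (A : α → Finset κ) (P : α → ℝ), CSt r A P ∧ ∀ i, CSat w r 0 A P i := by
  have hA : ∃ A : α → Finset κ, ∀ ε > 0, ∃ P : α → ℝ, CSt r A P ∧ ∀ i, CSat w r ε A P i := by
    by_contra hcon
    push Not at hcon
    choose e he hne using hcon
    obtain ⟨A0, -, hmin⟩ := Finset.exists_min_image Finset.univ e Finset.univ_nonempty
    obtain ⟨A, P, hst, hs⟩ := core_eps w hw r (e A0) hr (he A0)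
    obtain ⟨i, hi⟩ := hne A P hst
    refine hi fun S U hU => (hs i S U hU).trans ?_
    have := hmin A (Finset.mem_univ _)
    linarith
  obtain ⟨A, hA⟩ := hA
  have hA' : ∀ m : ℕ, ∃ P : α → ℝ, CSt r A P ∧ ∀ i, CSat w r (1 / ((m : ℝ) + 1)) A P i :=
    fun m => hA _ (by positivity)
  choose P hst hs using hA'
  have hbox : ∀ m, P m ∈ Set.Icc (fun _ : α => (0 : ℝ)) (fun i => w i (A i) + 1) := by
    intro m
    refine ⟨fun i => le_trans (by positivity) ((hst m).2.1 i), fun i => ?_⟩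
    have := hs m i ∅ ∅ (fun _ => by simp)
    simp [COu, hw] at this
    have h2 : ((m : ℝ) + 1)⁻¹ ≤ 1 := inv_le_one_of_one_le₀ (by linarith [(Nat.cast_nonneg m : (0:ℝ) ≤ m)])
    show P m i ≤ w i (A i) + 1
    linarith
  obtain ⟨Q, -, φ, hφ, hlim⟩ := isCompact_Icc.tendsto_subseq hbox
  have hl : ∀ i, Filter.Tendsto (fun m => P (φ m) i) Filter.atTop (nhds (Q i)) :=
    fun i => (tendsto_pi_nhds.1 hlim) i
  refine ⟨A, Q, ⟨(hst 0).1, fun i => ?_, fun i hi => ?_⟩, fun i S U hU => ?_⟩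
  · exact ge_of_tendsto' (hl i) fun m => (hst (φ m)).2.1 i
  · refine tendsto_nhds_unique (hl i) ?_
    have : (fun m => P (φ m) i) = fun _ => 0 := funext fun m => (hst (φ m)).2.2 i hi
    rw [this]; exact tendsto_const_nhds
  · have hz : Filter.Tendsto (fun m => 1 / ((φ m : ℝ) + 1)) Filter.atTop (nhds 0) :=
      tendsto_one_div_add_atTop_nhds_zero_nat.comp hφ.tendsto_atTop
    refine le_of_tendsto_of_tendsto' (f := fun m => COu w r A (P (φ m)) i S U)
      (g := fun m => w i (A i) - P (φ m) i + 1 / ((φ m : ℝ) + 1)) (b := Filter.atTop) ?_ ?_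
      (fun m => hs (φ m) i S U hU)
    · exact ((tendsto_const_nhds.sub (tendsto_finsetSum _ fun s _ => hl s)).sub tendsto_const_nhds)
    · exact (tendsto_const_nhds.sub (hl i)).add hz

end Core

lemma thr (n : ℕ) (hn : 1 ≤ n) (a : Fin n → ℝ) (ha : ∀ i, 0 ≤ a i) :
    ∃ t > 0, (∑ i, a i) / (4 * (Nat.clog 2 (2 * n) : ℝ)) ≤
      t * (#(Finset.univ.filter fun i => t ≤ a i) : ℝ) := by
  by_contra hcon
  push Not at hcon
  set L := Nat.clog 2 (2 * n) with hL
  have hL1 : 1 ≤ L := Nat.clog_pos (by norm_num) (by omega)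
  have hLR : (1 : ℝ) ≤ L := by exact_mod_cast hL1
  have hpow : (2 * n : ℝ) ≤ 2 ^ L := by
    have := Nat.le_pow_clog (b := 2) (by norm_num) (2 * n)
    exact_mod_cast this
  have : Nonempty (Fin n) := ⟨⟨0, hn⟩⟩
  obtain ⟨i0, -, hmax⟩ := Finset.exists_max_image Finset.univ a Finset.univ_nonempty
  set m := a i0 with hm
  have hSm : m ≤ ∑ i, a i := Finset.single_le_sum (fun i _ => ha i) (Finset.mem_univ i0)
  have hS : 0 < ∑ i, a i := by
    have h1 := hcon 1 one_pos
    have h2 : (0 : ℝ) ≤ 1 * (#(Finset.univ.filter fun i => 1 ≤ a i) : ℝ) := by positivity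
    have h3 := h2.trans_lt h1
    by_contra h
    have : ∑ i, a i = 0 := le_antisymm (not_lt.1 h) (Finset.sum_nonneg fun i _ => ha i)
    simp [this] at h3
  have hm0 : 0 < m := by
    by_contra h
    have : ∑ i, a i ≤ 0 := Finset.sum_nonpos fun i hi => (hmax i hi).trans (not_lt.1 h)
    linarith
  have hpt : ∀ i, a i ≤ m / (2 * n) +
      ∑ j ∈ Finset.Icc 1 L, 2 * (m / 2 ^ j) * (if m / 2 ^ j ≤ a i then 1 else 0) := by
    intro i
    have hnn : ∀ j ∈ Finset.Icc 1 L,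
        0 ≤ 2 * (m / 2 ^ j) * (if m / 2 ^ j ≤ a i then (1 : ℝ) else 0) := by
      intro j _; split_ifs <;> positivity
    by_cases h : m / 2 ^ L ≤ a i
    · have hex : ∃ j, 1 ≤ j ∧ m / 2 ^ j ≤ a i := ⟨L, hL1, h⟩
      classical
      obtain ⟨h1, h2⟩ := Nat.find_spec hex
      have hle : Nat.find hex ≤ L := Nat.find_min' hex ⟨hL1, h⟩
      have hmin : ∀ k, k < Nat.find hex → ¬ (1 ≤ k ∧ m / 2 ^ k ≤ a i) := fun k hk => Nat.find_min hex hk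
      generalize Nat.find hex = j at *
      have hs := Finset.single_le_sum hnn (Finset.mem_Icc.2 ⟨h1, hle⟩)
      rw [if_pos h2] at hs
      have : a i ≤ 2 * (m / 2 ^ j) := by
        obtain ⟨k, rfl⟩ : ∃ k, j = k + 1 := ⟨j - 1, by omega⟩
        have e : 2 * (m / 2 ^ (k + 1)) = m / 2 ^ k := by rw [pow_succ]; field_simp
        rw [e]
        rcases Nat.eq_zero_or_pos k with rfl | hk
        · simpa using hmax i (Finset.mem_univ _)
        · have := hmin k (by omega)
          by_contra hh
          exact this ⟨hk, (not_le.1 hh).le⟩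
      have : 0 ≤ m / (2 * n) := by positivity
      linarith
    · have h2 : m / 2 ^ L ≤ m / (2 * n) := by
        have : (0 : ℝ) < n := by exact_mod_cast hn
        gcongr
      have := Finset.sum_nonneg hnn
      linarith
  have hsum := Finset.sum_le_sum fun i (_ : i ∈ Finset.univ) => hpt i
  rw [Finset.sum_add_distrib, Finset.sum_comm] at hsum
  simp only [← Finset.mul_sum, Finset.sum_boole, Finset.sum_const, Finset.card_univ,
    Fintype.card_fin, nsmul_eq_mul] at hsum
  have hb : ∑ j ∈ Finset.Icc 1 L, 2 * (m / 2 ^ j) * (#(Finset.univ.filter fun i => m / 2 ^ j ≤ a i) : ℝ)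
      < ∑ j ∈ Finset.Icc 1 L, 2 * ((∑ i, a i) / (4 * (L : ℝ))) := by
    refine Finset.sum_lt_sum_of_nonempty ⟨1, by simp [hL1]⟩ fun j _ => ?_
    have := hcon (m / 2 ^ j) (by positivity)
    linarith
  simp only [Finset.sum_const, Nat.card_Icc, nsmul_eq_mul, Nat.add_sub_cancel] at hb
  have e1 : (L : ℝ) * (2 * ((∑ i, a i) / (4 * (L : ℝ)))) = (∑ i, a i) / 2 := by field_simp; norm_num
  have hn0 : (n : ℝ) ≠ 0 := by positivity
  have e2 : (n : ℝ) * (m / (2 * n)) = m / 2 := by field_simp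
  rw [e1] at hb
  rw [e2] at hsum
  linarith

lemma cwe_of_core {ι : Type} [Fintype ι] [DecidableEq ι] (n : ℕ)
    (v : Fin n → Finset ι → ℝ) (hv : ∀ i, ValidVal (v i)) (X : Fin n → Finset ι) (P : Fin n → ℝ)
    (hX : IsAlloc X) (hP : ∀ i, 0 ≤ P i) (hP0 : ∀ i, X i = ∅ → P i = 0)
    (h : ∀ i (T : Finset (Fin n)), v i (T.biUnion X) - ∑ s ∈ T, P s ≤ v i (X i) - P i) :
    ∃ p, IsCWE v X p ∧ Revenue X p = ∑ i, P i := by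
  set M := ∑ i, v i Finset.univ with hM
  have hM0 : ∀ i, v i Finset.univ ≤ M := fun i =>
    Finset.single_le_sum (fun i _ => (hv i).1 _) (Finset.mem_univ i)
  have hMn : 0 ≤ M := Finset.sum_nonneg fun i _ => (hv i).1 _
  let p : Finset ι → ℝ := fun B =>
    if B = unalloc X then M else ∑ i ∈ Finset.univ.filter (fun i => X i = B), P i
  have hne : ∀ i, X i ≠ ∅ → X i ≠ unalloc X := by
    intro i hi he
    obtain ⟨x, hx⟩ := Finset.nonempty_iff_ne_empty.2 hi
    have h2 := hx
    rw [he, unalloc, Finset.mem_sdiff] at h2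
    exact h2.2 (Finset.le_sup (f := X) (Finset.mem_univ i) hx)
  have hpX : ∀ i, X i ≠ ∅ → p (X i) = P i := by
    intro i hi
    have : Finset.univ.filter (fun j => X j = X i) = {i} := by
      ext j
      simp only [Finset.mem_filter, Finset.mem_univ, true_and, Finset.mem_singleton]
      refine ⟨fun hj => ?_, fun hj => by rw [hj]⟩
      by_contra hji
      have := hX j i hji
      rw [hj, disjoint_self] at this
      exact hi this
    simp only [p, if_neg (hne i hi), this, Finset.sum_singleton]
  have hpn : ∀ B, 0 ≤ p B := by
    intro B
    simp only [p]
    split_ifs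
    · exact hMn
    · exact Finset.sum_nonneg fun i _ => hP i
  have hown : ∀ i, util (v i) p (own X i) = v i (X i) - P i := by
    intro i
    by_cases hi : X i = ∅
    · simp [util, own, hi, hP0 i hi]
    · simp [util, own, hi, hpX i hi]
  refine ⟨p, ⟨hX, fun B _ => hpn B, fun i S hS => ?_⟩, ?_⟩
  · rw [hown]
    by_cases h0 : unalloc X ∈ S
    · have h1 : M ≤ ∑ B ∈ S, p B := by
        have := Finset.single_le_sum (fun B _ => hpn B) h0
        simpa [p] using this
      have h2 := (hv i).2.1 (S.sup id) Finset.univ (Finset.subset_univ _)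
      have h3 := h i ∅
      simp [(hv i).2.2] at h3
      have := hM0 i
      unfold util
      linarith
    · have e : S = (Finset.univ.filter (fun j => X j ∈ S)).image X := by
        ext B
        simp only [Finset.mem_image, Finset.mem_filter, Finset.mem_univ, true_and]
        constructor
        · intro hB
          have := hS hB
          simp only [Bundles, Finset.mem_erase, Finset.mem_insert, Finset.mem_image,
            Finset.mem_univ, true_and] at this
          rcases this with ⟨-, rfl | ⟨j, rfl⟩⟩
          · exact absurd hB h0
          · exact ⟨j, hB, rfl⟩
        · rintro ⟨j, hj, rfl⟩; exact hj
      have hSne : ∀ j, X j ∈ S → X j ≠ ∅ := fun j hj => by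
        have := hS hj
        simp only [Bundles, Finset.mem_erase] at this
        exact this.1
      have e1 : S.sup id = (Finset.univ.filter (fun j => X j ∈ S)).biUnion X := by
        conv_lhs => rw [e]
        rw [Finset.sup_image, Finset.sup_eq_biUnion]; rfl
      have e2 : ∑ B ∈ S, p B = ∑ j ∈ Finset.univ.filter (fun j => X j ∈ S), P j := by
        conv_lhs => rw [e]
        rw [Finset.sum_image]
        · refine Finset.sum_congr rfl fun j hj => hpX j (hSne j (by simpa using hj))
        · intro a ha b hb hab
          by_contra hne2
          have := hX a b hne2
          rw [← hab, disjoint_self] at this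
          exact hSne a (by simpa using ha) this
      rw [util, e1, e2]
      exact h i _
  · rw [Revenue, Finset.sum_congr rfl (fun i hi => hpX i (Finset.mem_filter.1 hi).2),
      Finset.sum_filter]
    refine Finset.sum_congr rfl fun i _ => ?_
    by_cases hi : X i = ∅
    · simp [hi, hP0 i hi]
    · simp [hi]

/-- for every auction with `n ≥ 1` agents and every allocation `Y`, there exists
a CWE whose revenue is at least `SW(Y) / (16·⌈log₂(2n)⌉)`. -/
theorem exists_cwe_log_revenue_of_allocation {ι : Type} [Fintype ι] [DecidableEq ι] (n : ℕ)
    (hn : 1 ≤ n)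
    (v : Fin n → Finset ι → ℝ) (hv : ∀ i, ValidVal (v i))
    (Y : Fin n → Finset ι) (hY : IsAlloc Y) :
    ∃ (X : Fin n → Finset ι) (p : Finset ι → ℝ),
      IsCWE v X p ∧ Revenue X p ≥ SW v Y / (16 * (Nat.clog 2 (2 * n) : ℝ)) := by
  classical
  obtain ⟨t, ht, hthr⟩ := thr n hn (fun i => v i (Y i)) (fun i => (hv i).1 _)
  let κ := {i : Fin n // t ≤ v i (Y i)}
  let f : κ → Finset ι := fun k => Y k.1
  have hf : ∀ k, f k ≠ ∅ := by
    rintro ⟨k, hk⟩ he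
    simp only [f] at he
    rw [he, (hv k).2.2] at hk
    linarith
  obtain ⟨A, P, ⟨hd, hp, h0⟩, hs⟩ := core (κ := κ) (fun i T => v i (T.biUnion f))
    (fun i => by simp [(hv i).2.2]) (t / 2) (by positivity)
  have hXe : ∀ i, (A i).biUnion f = ∅ → A i = ∅ := by
    intro i hi
    rw [Finset.eq_empty_iff_forall_notMem]
    exact fun k hk => hf k (Finset.subset_empty.1 (hi ▸ Finset.subset_biUnion_of_mem f hk))
  obtain ⟨p, hc, hR⟩ := cwe_of_core n v hv (fun i => (A i).biUnion f) P
    (by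
      intro i j hij
      rw [Finset.disjoint_biUnion_left]
      intro a ha
      rw [Finset.disjoint_biUnion_right]
      intro b hb
      refine hY _ _ fun hab => ?_
      have : a = b := Subtype.ext hab
      subst this
      exact Finset.disjoint_left.1 (hd i j hij) ha hb)
    (fun i => le_trans (by positivity) (hp i)) (fun i hi => h0 i (hXe i hi))
    (by
      intro i T
      have := hs i T ∅ (fun _ => by simp)
      simp only [COu, Finset.union_empty, Finset.card_empty, Nat.cast_zero, mul_zero, sub_zero,
        add_zero, Finset.biUnion_biUnion] at this
      exact this)
  refine ⟨_, p, hc, ?_⟩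
  rw [hR]
  have hsold : t / 2 * ∑ i, (#(A i) : ℝ) ≤ ∑ i, P i := by
    rw [Finset.mul_sum]; exact Finset.sum_le_sum fun i _ => hp i
  -- the unsold bundles
  set D : Finset κ := Finset.univ.biUnion A with hD
  have hDc : #D = ∑ i, #(A i) := Finset.card_biUnion fun a _ b _ hab => hd a b hab
  have huns : #(Finset.univ \ D) ≤ ∑ i, #(A i) := by
    have h1 : #(Finset.univ \ D) ≤ #(Finset.univ.filter fun i => A i ≠ ∅) := by
      refine Finset.card_le_card_of_injOn (fun k => k.1) ?_ (fun a _ b _ hab => Subtype.ext hab)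
      intro k hk
      simp only [Finset.coe_filter, Set.mem_ofPred_eq, Finset.mem_univ, true_and]
      intro hA
      have hk' : ∀ i, k ∉ A i := by
        simpa [hD] using hk
      have := hs k.1 ∅ {k} (fun i => by simpa using hk' i)
      simp [COu, hA, h0 _ hA, (hv _).2.2] at this
      have h2 : t ≤ v k.1 (f k) := k.2
      linarith
    refine h1.trans ?_
    rw [Finset.card_filter]
    refine Finset.sum_le_sum fun i _ => ?_
    split_ifs with h
    · exact Finset.card_pos.2 (Finset.nonempty_iff_ne_empty.2 h)
    · exact Nat.zero_le _
  have hcard : #(Finset.univ.filter fun i => t ≤ v i (Y i)) ≤ 2 * ∑ i, #(A i) := by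
    have h1 : #(Finset.univ.filter fun i => t ≤ v i (Y i)) = Fintype.card κ :=
      (Fintype.card_subtype _).symm
    have h2 : #(Finset.univ \ D) + #D = Fintype.card κ :=
      Finset.card_sdiff_add_card_eq_card (Finset.subset_univ D)
    omega
  have hcardR : (#(Finset.univ.filter fun i => t ≤ v i (Y i)) : ℝ) ≤ 2 * ∑ i, (#(A i) : ℝ) := by
    exact_mod_cast hcard
  have e : SW v Y / (16 * (Nat.clog 2 (2 * n) : ℝ)) =
      (∑ i, v i (Y i)) / (4 * (Nat.clog 2 (2 * n) : ℝ)) / 4 := by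
    rw [div_div, SW]; congr 1; ring
  rw [e]
  have := mul_le_mul_of_nonneg_left hcardR ht.le
  linarith
end

section
/- For every auction with n ≥ 1 agents having nonnegative, monotone, normalized valuations, there exists a Combinatorial Walrasian Equilibrium (X, p) whose revenue is at least (max_Z SW(Z))/(16·⌈log₂(2n)⌉), where the maximum is over all allocations Z; i.e., every valuation profile admits a CWE extracting revenue within an O(log n) factor of the optimal social welfare. -/
open Finset

theorem bucket_point (O a : ℝ) (hO : 0 < O) (ha : a ≤ O) (L : ℕ) :
    (a - O / 2 ^ L) / 2 ≤ ∑ k ∈ Finset.range L, (if O / 2 ^ (k + 1) ≤ a then O / 2 ^ (k + 1) else 0) := by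
  induction L with
  | zero => simp; linarith
  | succ L ih =>
    rw [Finset.sum_range_succ]
    have e : O / 2 ^ L = 2 * (O / 2 ^ (L + 1)) := by rw [pow_succ]; field_simp
    have hp : 0 < O / 2 ^ (L + 1) := by positivity
    split_ifs with h
    · rw [e] at ih; linarith
    · have : 0 ≤ ∑ k ∈ Finset.range L, (if O / 2 ^ (k + 1) ≤ a then O / 2 ^ (k + 1) else 0) := by
        apply Finset.sum_nonneg
        intro k _
        split_ifs
        · positivity
        · exact le_rfl
      push Not at h
      linarith

theorem bucket (n : ℕ) (hn : 1 ≤ n) (a : Fin n → ℝ) (ha : ∀ i, 0 ≤ a i) (hO : 0 < ∑ i, a i) :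
    ∃ t : ℝ, 0 < t ∧ (∑ i, a i) / (4 * (Nat.clog 2 (2 * n) : ℝ)) ≤
      ((univ.filter (fun i => t ≤ a i)).card : ℝ) * t := by
  set O := ∑ i, a i with hOdef
  set L := Nat.clog 2 (2 * n) with hL
  have hLpos : 0 < L := Nat.clog_pos (by norm_num) (by omega)
  have hLR : (0 : ℝ) < L := by exact_mod_cast hLpos
  have hpow : 2 * n ≤ 2 ^ L := Nat.le_pow_clog (by norm_num) _
  have hpowR : 2 * (n : ℝ) ≤ 2 ^ L := by exact_mod_cast hpow
  by_contra hcon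
  push Not at hcon
  have h1 : ∀ k ∈ Finset.range L, ∑ i, (if O / 2 ^ (k + 1) ≤ a i then O / 2 ^ (k + 1) else 0)
      < O / (4 * L) := by
    intro k _
    have := hcon (O / 2 ^ (k + 1)) (by positivity)
    rw [← Finset.sum_filter, Finset.sum_const, nsmul_eq_mul]
    exact this
  have h2 := Finset.sum_lt_sum_of_nonempty (Finset.nonempty_range_iff.mpr hLpos.ne') h1
  rw [Finset.sum_comm, Finset.sum_const, Finset.card_range, nsmul_eq_mul] at h2
  have h3 : ∑ i, (a i - O / 2 ^ L) / 2 ≤ ∑ i, ∑ k ∈ Finset.range L,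
      (if O / 2 ^ (k + 1) ≤ a i then O / 2 ^ (k + 1) else 0) := by
    apply Finset.sum_le_sum
    intro i _
    exact bucket_point O (a i) hO (Finset.single_le_sum (fun j _ => ha j) (mem_univ i)) L
  rw [← Finset.sum_div, Finset.sum_sub_distrib, Finset.sum_const, card_univ, Fintype.card_fin,
    nsmul_eq_mul, ← hOdef] at h3
  have h4 : (n : ℝ) * (O / 2 ^ L) ≤ O / 2 := by
    rw [mul_div_assoc', div_le_div_iff₀ (by positivity) (by norm_num)]
    nlinarith
  have h5 : (L : ℝ) * (O / (4 * L)) = O / 4 := by field_simp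
  linarith

/-- utility of a set of bundle indices -/
def ut {ι : Type} [DecidableEq ι] {β : Type} (w : Finset ι → ℝ)
    (X : β → Finset ι) (π : β → ℝ) (A : Finset β) : ℝ :=
  w (A.sup X) - ∑ b ∈ A, π b

/-- state invariant (without satisfaction) -/
structure MInv {ι : Type} [DecidableEq ι] {n : ℕ} (J : Finset (Fin n)) (Z : Fin n → Finset ι)
    (q : ℝ) (X : Fin n ⊕ Fin n → Finset ι) (π : Fin n ⊕ Fin n → ℝ) : Prop where
  disj : ∀ a b, a ≠ b → Disjoint (X a) (X b)
  ge : ∀ b, X b ≠ ∅ → q ≤ π b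
  zero : ∀ b, X b = ∅ → π b = 0
  dummy : ∀ j, X (Sum.inr j) = ∅ ∨ (X (Sum.inr j) = Z j ∧ π (Sum.inr j) = q ∧ j ∈ J)
  tot : q * J.card ≤ ∑ b, π b

/-- state with assigned agents approximately satisfied -/
def Stt {ι : Type} [DecidableEq ι] {n : ℕ} (v : Fin n → Finset ι → ℝ) (J : Finset (Fin n))
    (Z : Fin n → Finset ι)
    (q ε : ℝ) (X : Fin n ⊕ Fin n → Finset ι) (π : Fin n ⊕ Fin n → ℝ) : Prop :=
  MInv J Z q X π ∧ ∀ i, X (Sum.inl i) = ∅ ∨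
    ∀ A, ut (v i) X π A ≤ v i (X (Sum.inl i)) - π (Sum.inl i) + ε

theorem MInv.nonneg {ι : Type} [DecidableEq ι] {n : ℕ} {J : Finset (Fin n)} {Z : Fin n → Finset ι}
    {q : ℝ} {X : Fin n ⊕ Fin n → Finset ι} {π : Fin n ⊕ Fin n → ℝ} (h : MInv J Z q X π)
    (hq : 0 < q) (b) : 0 ≤ π b := by
  by_cases hb : X b = ∅
  · exact (h.zero b hb).ge
  · exact hq.le.trans (h.ge b hb)

theorem pi_bound {ι : Type} [Fintype ι] [DecidableEq ι] {n : ℕ} {J : Finset (Fin n)}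
    {Z : Fin n → Finset ι} {v : Fin n → Finset ι → ℝ} (hv : ∀ i, ValidVal (v i))
    {q ε : ℝ} (hq : 0 < q) (he : 0 ≤ ε) {X : Fin n ⊕ Fin n → Finset ι} {π : Fin n ⊕ Fin n → ℝ}
    (h : MInv J Z q X π) (hs : ∀ i, X (Sum.inl i) = ∅ ∨
      ∀ A, ut (v i) X π A ≤ v i (X (Sum.inl i)) - π (Sum.inl i) + ε) (b) :
    π b ≤ (∑ i, v i univ) + ε + q := by
  have hs0 : 0 ≤ ∑ i, v i univ := Finset.sum_nonneg fun i _ => (hv i).1 _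
  rcases b with i | j
  · rcases hs i with h0 | h1
    · rw [h.zero _ h0]; linarith
    · have := h1 ∅
      simp only [ut, Finset.sup_empty, Finset.sum_empty, Finset.bot_eq_empty, (hv i).2.2] at this
      have h2 := (hv i).2.1 (X (Sum.inl i)) univ (subset_univ _)
      have h3 : v i univ ≤ ∑ i, v i univ :=
        Finset.single_le_sum (f := fun i => v i univ) (fun i _ => (hv i).1 _) (mem_univ i)
      linarith
  · rcases h.dummy j with h0 | h1
    · rw [h.zero _ h0]; linarith
    · rw [h1.2.1]; linarith

/-- options only shrink -/
theorem ut_merge {ι β : Type} [DecidableEq ι] [DecidableEq β] (w : Finset ι → ℝ)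
    (X : β → Finset ι) (π : β → ℝ) (A : Finset β) (c : β) (hc : c ∈ A) (ε : ℝ) (he : 0 ≤ ε)
    (A' : Finset β) :
    ∃ A'', ut w (fun b => if b = c then A.sup X else if b ∈ A then ∅ else X b)
      (fun b => if b = c then (∑ a ∈ A, π a) + ε else if b ∈ A then 0 else π b) A'
      ≤ ut w X π A'' := by
  classical
  set X' : β → Finset ι := (fun b => if b = c then A.sup X else if b ∈ A then ∅ else X b) with hX'
  set π' : β → ℝ := (fun b => if b = c then (∑ a ∈ A, π a) + ε else if b ∈ A then 0 else π b) with hπ'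
  have e1 : (A' \ A).sup X' = (A' \ A).sup X := by
    apply Finset.sup_congr rfl
    intro b hb
    have hb2 := (Finset.mem_sdiff.mp hb).2
    have : b ≠ c := by rintro rfl; exact hb2 hc
    simp [hX', this, hb2]
  have e2 : ∑ b ∈ A' \ A, π' b = ∑ b ∈ A' \ A, π b := by
    apply Finset.sum_congr rfl
    intro b hb
    have hb2 := (Finset.mem_sdiff.mp hb).2
    have : b ≠ c := by rintro rfl; exact hb2 hc
    simp [hπ', this, hb2]
  have e3 : A'.sup X' = (A' \ A).sup X ⊔ (A' ∩ A).sup X' := by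
    rw [← e1, ← Finset.sup_union, Finset.sdiff_union_inter]
  have e4 : ∑ b ∈ A', π' b = ∑ b ∈ A' \ A, π b + ∑ b ∈ A' ∩ A, π' b := by
    rw [← e2, ← Finset.sum_union (Finset.disjoint_sdiff_inter A' A), Finset.sdiff_union_inter]
  by_cases hcA : c ∈ A'
  · refine ⟨A' \ A ∪ A, ?_⟩
    have e5 : (A' ∩ A).sup X' = A.sup X := by
      apply le_antisymm
      · apply Finset.sup_le
        intro b hb
        have := (Finset.mem_inter.mp hb).2
        simp only [hX', this, if_true]
        split_ifs
        · exact le_rfl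
        · exact bot_le
      · have := Finset.le_sup (f := X') (Finset.mem_inter.mpr ⟨hcA, hc⟩)
        simpa [hX'] using this
    have e6 : ∑ b ∈ A' ∩ A, π' b = (∑ a ∈ A, π a) + ε := by
      rw [Finset.sum_eq_single_of_mem c (Finset.mem_inter.mpr ⟨hcA, hc⟩)]
      · simp [hπ']
      · intro b hb hbc
        simp [hπ', hbc, (Finset.mem_inter.mp hb).2]
    unfold ut
    rw [e3, e4, e5, e6, Finset.sup_union, Finset.sum_union Finset.sdiff_disjoint]
    linarith
  · refine ⟨A' \ A, ?_⟩
    have e5 : (A' ∩ A).sup X' = ⊥ := by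
      rw [Finset.sup_eq_bot_iff]
      intro b hb
      have hb' := Finset.mem_inter.mp hb
      have : b ≠ c := by rintro rfl; exact hcA hb'.1
      simp [hX', this, hb'.2]
    have e6 : ∑ b ∈ A' ∩ A, π' b = 0 := by
      apply Finset.sum_eq_zero
      intro b hb
      have hb' := Finset.mem_inter.mp hb
      have : b ≠ c := by rintro rfl; exact hcA hb'.1
      simp [hπ', this, hb'.2]
    unfold ut
    rw [e3, e4, e5, e6]
    simp

theorem step {ι : Type} [Fintype ι] [DecidableEq ι] {n : ℕ} {J : Finset (Fin n)}
    {Z : Fin n → Finset ι} {v : Fin n → Finset ι → ℝ} (hv : ∀ i, ValidVal (v i))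
    {q ε : ℝ} (hq : 0 < q) (he : 0 < ε) {X : Fin n ⊕ Fin n → Finset ι} {π : Fin n ⊕ Fin n → ℝ}
    (h : Stt v J Z q ε X π) (j : Fin n) (hj : X (Sum.inl j) = ∅) (A0 : Finset (Fin n ⊕ Fin n))
    (hA0 : ε < ut (v j) X π A0) :
    ∃ X' π', Stt v J Z q ε X' π' ∧ ∑ b, π' b = (∑ b, π b) + ε := by
  classical
  obtain ⟨A1, -, hA1⟩ := Finset.exists_max_image (univ : Finset (Finset (Fin n ⊕ Fin n)))
    (ut (v j) X π) univ_nonempty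
  set c : Fin n ⊕ Fin n := Sum.inl j with hcdef
  obtain ⟨A, hc, hAmax⟩ : ∃ A, c ∈ A ∧ ∀ B, ut (v j) X π B ≤ ut (v j) X π A := by
    refine ⟨insert c A1, mem_insert_self _ _, fun B => ?_⟩
    refine (hA1 B (mem_univ _)).trans (le_of_eq ?_)
    by_cases hm : c ∈ A1
    · rw [Finset.insert_eq_of_mem hm]
    · unfold ut
      rw [Finset.sup_insert, Finset.sum_insert hm, hj, h.1.zero _ hj]
      simp
  have hApos : ε < ut (v j) X π A := hA0.trans_le (hAmax _)
  have hne : A.sup X ≠ ∅ := by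
    intro h0
    unfold ut at hApos
    rw [h0, (hv j).2.2] at hApos
    have := Finset.sum_nonneg (s := A) (fun b _ => h.1.nonneg hq b)
    linarith
  have hqA : q ≤ ∑ a ∈ A, π a := by
    have : ∃ a ∈ A, X a ≠ ∅ := by
      by_contra hcon
      push Not at hcon
      exact hne ((Finset.sup_eq_bot_iff _ _).mpr hcon)
    obtain ⟨a, ha, hxa⟩ := this
    exact (h.1.ge a hxa).trans (Finset.single_le_sum (fun b _ => h.1.nonneg hq b) ha)
  set X' : Fin n ⊕ Fin n → Finset ι :=
    (fun b => if b = c then A.sup X else if b ∈ A then ∅ else X b) with hX'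
  set π' : Fin n ⊕ Fin n → ℝ :=
    (fun b => if b = c then (∑ a ∈ A, π a) + ε else if b ∈ A then 0 else π b) with hπ'
  have hsum : ∑ b, π' b = (∑ b, π b) + ε := by
    rw [← Finset.sum_sdiff (subset_univ A), ← Finset.sum_sdiff (f := π) (subset_univ A)]
    have e2 : ∑ b ∈ univ \ A, π' b = ∑ b ∈ univ \ A, π b := by
      apply Finset.sum_congr rfl
      intro b hb
      have hb2 := (Finset.mem_sdiff.mp hb).2
      have : b ≠ c := by rintro rfl; exact hb2 hc
      simp [hπ', this, hb2]
    have e6 : ∑ b ∈ A, π' b = (∑ a ∈ A, π a) + ε := by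
      rw [Finset.sum_eq_single_of_mem c hc]
      · simp [hπ']
      · intro b hb hbc
        simp [hπ', hbc, hb]
    rw [e2, e6]; ring
  have hd1 : ∀ b, b ∉ A → Disjoint (A.sup X) (X b) := by
    intro b hb
    rw [Finset.disjoint_sup_left]
    intro a ha
    exact h.1.disj a b (by rintro rfl; exact hb ha)
  have hX'c : X' c = A.sup X := by simp [hX']
  have hπ'c : π' c = (∑ a ∈ A, π a) + ε := by simp [hπ']
  have hXA : ∀ b, b ≠ c → b ∈ A → X' b = ∅ ∧ π' b = 0 := by
    intro b h1 h2; simp [hX', hπ', h1, h2]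
  have hXn : ∀ b, b ∉ A → X' b = X b ∧ π' b = π b := by
    intro b h2
    have : b ≠ c := by rintro rfl; exact h2 hc
    simp [hX', hπ', this, h2]
  refine ⟨X', π', ⟨⟨?_, ?_, ?_, ?_, ?_⟩, ?_⟩, hsum⟩
  · intro a b hab
    by_cases ha : a = c
    · subst ha
      by_cases hb : b ∈ A
      · rw [(hXA b hab.symm hb).1]; exact Finset.disjoint_empty_right _
      · rw [hX'c, (hXn b hb).1]; exact hd1 b hb
    · by_cases haA : a ∈ A
      · rw [(hXA a ha haA).1]; exact Finset.disjoint_empty_left _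
      · rw [(hXn a haA).1]
        by_cases hb : b = c
        · rw [hb, hX'c]; exact (hd1 a haA).symm
        · by_cases hbA : b ∈ A
          · rw [(hXA b hb hbA).1]; exact Finset.disjoint_empty_right _
          · rw [(hXn b hbA).1]; exact h.1.disj a b hab
  · intro b hb
    by_cases hbc : b = c
    · rw [hbc, hπ'c]; linarith
    · by_cases hbA : b ∈ A
      · exact absurd (hXA b hbc hbA).1 hb
      · rw [(hXn b hbA).2]; rw [(hXn b hbA).1] at hb; exact h.1.ge b hb
  · intro b hb
    by_cases hbc : b = c
    · rw [hbc, hX'c] at hb; exact absurd hb hne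
    · by_cases hbA : b ∈ A
      · exact (hXA b hbc hbA).2
      · rw [(hXn b hbA).2]; rw [(hXn b hbA).1] at hb; exact h.1.zero b hb
  · intro k
    by_cases hbA : Sum.inr k ∈ A
    · left; exact (hXA _ (by simp [hcdef]) hbA).1
    · rw [(hXn _ hbA).1, (hXn _ hbA).2]; exact h.1.dummy k
  · rw [hsum]; linarith [h.1.tot]
  · intro i
    by_cases hij : i = j
    · right
      intro A'
      obtain ⟨A'', hA''⟩ := ut_merge (v i) X π A c hc ε he.le A'
      subst hij
      refine hA''.trans ((hAmax _).trans ?_)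
      rw [← hcdef, hX'c, hπ'c]
      unfold ut
      linarith
    · have hic : (Sum.inl i : Fin n ⊕ Fin n) ≠ c := by simpa [hcdef] using hij
      by_cases hiA : Sum.inl i ∈ A
      · left; exact (hXA _ hic hiA).1
      · rw [(hXn _ hiA).1, (hXn _ hiA).2]
        rcases h.2 i with h0 | h1
        · left; exact h0
        · right
          intro A'
          obtain ⟨A'', hA''⟩ := ut_merge (v i) X π A c hc ε he.le A'
          exact hA''.trans (h1 _)

theorem approx {ι : Type} [Fintype ι] [DecidableEq ι] {n : ℕ} (J : Finset (Fin n))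
    (Z : Fin n → Finset ι) (hZ : IsAlloc Z) (v : Fin n → Finset ι → ℝ) (hv : ∀ i, ValidVal (v i))
    (q ε : ℝ) (hq : 0 < q) (he : 0 < ε) (hJ : ∀ j ∈ J, Z j ≠ ∅) :
    ∃ X π, MInv J Z q X π ∧
      ∀ i A, ut (v i) X π A ≤ v i (X (Sum.inl i)) - π (Sum.inl i) + ε := by
  classical
  let T : Set ℝ := {s | ∃ X π, Stt v J Z q ε X π ∧ s = ∑ b, π b}
  have hTb : BddAbove T := by
    refine ⟨∑ b : Fin n ⊕ Fin n, ((∑ i, v i univ) + ε + q), ?_⟩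
    rintro s ⟨X, π, h, rfl⟩
    exact Finset.sum_le_sum fun b _ => pi_bound hv hq he.le h.1 h.2 b
  have hTn : T.Nonempty := by
    refine ⟨_, Sum.elim (fun _ => ∅) (fun j => if j ∈ J then Z j else ∅),
      Sum.elim (fun _ => 0) (fun j => if j ∈ J then q else 0), ⟨⟨?_, ?_, ?_, ?_, ?_⟩, ?_⟩, rfl⟩
    · rintro (a | a) (b | b) hab
      · simp
      · simp
      · simp
      · simp only [Sum.elim_inr]
        split_ifs
        · exact hZ a b (by simpa using hab)
        all_goals simp
    · rintro (b | b) hb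
      · simp at hb
      · simp only [Sum.elim_inr] at hb ⊢
        split_ifs at hb ⊢ <;> simp at *
    · rintro (b | b) hb
      · simp
      · simp only [Sum.elim_inr] at hb ⊢
        split_ifs at hb ⊢ with hbJ
        · exact absurd hb (hJ b hbJ)
        · rfl
    · intro j
      simp only [Sum.elim_inr]
      by_cases hjJ : j ∈ J <;> simp [hjJ]
    · rw [Fintype.sum_sum_type]
      simp [mul_comm]
    · intro i; left; simp
  obtain ⟨s, ⟨X, π, h, rfl⟩, hs⟩ := exists_lt_of_lt_csSup hTn (sub_lt_self (sSup T) he)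
  refine ⟨X, π, h.1, ?_⟩
  intro i A
  rcases h.2 i with h0 | h1
  · by_contra hcon
    push Not at hcon
    rw [h0, h.1.zero _ h0, (hv i).2.2] at hcon
    obtain ⟨X', π', h', hsum⟩ := step hv hq he h i h0 A (by linarith)
    have := le_csSup hTb ⟨X', π', h', rfl⟩
    linarith
  · exact h1 A

theorem exact_eq {ι : Type} [Fintype ι] [DecidableEq ι] {n : ℕ} (J : Finset (Fin n))
    (Z : Fin n → Finset ι) (hZ : IsAlloc Z) (v : Fin n → Finset ι → ℝ) (hv : ∀ i, ValidVal (v i))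
    (q : ℝ) (hq : 0 < q) (hJ : ∀ j ∈ J, Z j ≠ ∅) :
    ∃ X π, MInv J Z q X π ∧
      ∀ i A, ut (v i) X π A ≤ v i (X (Sum.inl i)) - π (Sum.inl i) := by
  classical
  have hX : ∃ X, ∀ k : ℕ, ∃ π, MInv J Z q X π ∧
      ∀ i A, ut (v i) X π A ≤ v i (X (Sum.inl i)) - π (Sum.inl i) + 1 / ((k : ℝ) + 1) := by
    by_contra hcon
    push Not at hcon
    choose K hK using hcon
    obtain ⟨X, π, h1, h2⟩ := approx J Z hZ v hv q (1 / (((univ.sup K : ℕ) : ℝ) + 1)) hq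
      (by positivity) hJ
    obtain ⟨i, A, h3⟩ := hK X π h1
    have h4 := h2 i A
    have h5 : K X ≤ univ.sup K := Finset.le_sup (mem_univ X)
    have h6 : (1 : ℝ) / (((univ.sup K : ℕ) : ℝ) + 1) ≤ 1 / ((K X : ℝ) + 1) := by
      apply one_div_le_one_div_of_le (by positivity)
      have : (K X : ℝ) ≤ ((univ.sup K : ℕ) : ℝ) := by exact_mod_cast h5
      linarith
    linarith
  obtain ⟨X, hX⟩ := hX
  choose P hP1 hP2 using hX
  have hcomp : IsCompact (Set.Icc (0 : Fin n ⊕ Fin n → ℝ) (fun _ => (∑ i, v i univ) + 1 + q)) :=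
    isCompact_Icc
  have hmem : ∀ k, P k ∈ Set.Icc (0 : Fin n ⊕ Fin n → ℝ) (fun _ => (∑ i, v i univ) + 1 + q) := by
    intro k
    refine ⟨fun b => (hP1 k).nonneg hq b, fun b => ?_⟩
    have h1 := pi_bound hv hq (by positivity) (hP1 k) (fun i => Or.inr (hP2 k i)) b
    have : 1 / ((k : ℝ) + 1) ≤ 1 := by
      rw [div_le_one (by positivity)]
      have : (0 : ℝ) ≤ k := by positivity
      linarith
    show P k b ≤ (∑ i, v i univ) + 1 + q
    linarith
  obtain ⟨π, -, φ, hφ, hlim⟩ := hcomp.tendsto_subseq hmem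
  have hl : ∀ b, Filter.Tendsto (fun k => P (φ k) b) Filter.atTop (nhds (π b)) := fun b =>
    (tendsto_pi_nhds.mp hlim) b
  refine ⟨X, π, ⟨(hP1 0).disj, ?_, ?_, ?_, ?_⟩, ?_⟩
  · intro b hb
    exact ge_of_tendsto' (hl b) fun k => (hP1 (φ k)).ge b hb
  · intro b hb
    refine tendsto_nhds_unique (hl b) ?_
    simp only [(hP1 _).zero b hb]
    exact tendsto_const_nhds
  · intro j
    by_cases h0 : X (Sum.inr j) = ∅
    · left; exact h0
    · right
      have h1 : ∀ k, X (Sum.inr j) = Z j ∧ P k (Sum.inr j) = q ∧ j ∈ J := fun k =>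
        ((hP1 k).dummy j).resolve_left h0
      refine ⟨(h1 0).1, ?_, (h1 0).2.2⟩
      refine tendsto_nhds_unique (hl _) ?_
      simp only [(h1 _).2.1]
      exact tendsto_const_nhds
  · exact ge_of_tendsto' (tendsto_finset_sum univ fun b _ => hl b) fun k => (hP1 (φ k)).tot
  · intro i A
    have t1 : Filter.Tendsto (fun k => ut (v i) X (P (φ k)) A) Filter.atTop
        (nhds (ut (v i) X π A)) :=
      tendsto_const_nhds.sub (tendsto_finset_sum A fun b _ => hl b)
    have t2 : Filter.Tendsto (fun k => v i (X (Sum.inl i)) - P (φ k) (Sum.inl i) +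
        1 / (((φ k : ℕ) : ℝ) + 1)) Filter.atTop
        (nhds (v i (X (Sum.inl i)) - π (Sum.inl i) + 0)) :=
      (tendsto_const_nhds.sub (hl _)).add
        (tendsto_one_div_add_atTop_nhds_zero_nat.comp hφ.tendsto_atTop)
    rw [add_zero] at t2
    exact le_of_tendsto_of_tendsto' t1 t2 fun k => hP2 (φ k) i A

theorem cwe_of_bucket {ι : Type} [Fintype ι] [DecidableEq ι] {n : ℕ} (J : Finset (Fin n))
    (Z : Fin n → Finset ι) (hZ : IsAlloc Z) (v : Fin n → Finset ι → ℝ) (hv : ∀ i, ValidVal (v i))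
    (q : ℝ) (hq : 0 < q) (hJ : ∀ j ∈ J, 2 * q ≤ v j (Z j)) :
    ∃ X p, IsCWE v X p ∧ q * J.card / 2 ≤ Revenue X p := by
  classical
  obtain ⟨Y, π, hI, hsat⟩ := exact_eq J Z hZ v hv q hq (by
    intro j hj h0
    have := hJ j hj
    rw [h0, (hv j).2.2] at this
    linarith)
  set X : Fin n → Finset ι := fun i => Y (Sum.inl i) with hXdef
  set big : ℝ := ∑ i, v i univ with hbig
  have hbigge : ∀ i, v i univ ≤ big := fun i =>
    Finset.single_le_sum (f := fun i => v i univ) (fun i _ => (hv i).1 _) (mem_univ i)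
  have hbig0 : 0 ≤ big := Finset.sum_nonneg fun i _ => (hv i).1 _
  let p : Finset ι → ℝ := fun B => if B = unalloc X then big else
    ∑ i ∈ univ.filter (fun i => X i = B), π (Sum.inl i)
  have hAl : IsAlloc X := fun i j hij => hI.disj _ _ (by simpa using hij)
  have hπ0 : ∀ b, 0 ≤ π b := fun b => hI.nonneg hq b
  have hp0 : ∀ B, 0 ≤ p B := by
    intro B
    simp only [p]
    split_ifs
    · exact hbig0
    · exact Finset.sum_nonneg fun i _ => hπ0 _
  have hpX : ∀ i, X i ≠ ∅ → p (X i) = π (Sum.inl i) := by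
    intro i hi
    have hun : X i ≠ unalloc X := by
      intro h
      obtain ⟨x, hx⟩ := Finset.nonempty_iff_ne_empty.mpr hi
      have h1 : x ∈ unalloc X := h ▸ hx
      unfold unalloc at h1
      exact (Finset.mem_sdiff.mp h1).2 (Finset.le_sup (f := X) (mem_univ i) hx)
    simp only [p, if_neg hun]
    have : univ.filter (fun k => X k = X i) = {i} := by
      ext k
      simp only [mem_filter, mem_univ, true_and, mem_singleton]
      constructor
      · intro hk
        by_contra hne
        have := hAl k i hne
        rw [hk, Finset.disjoint_self_iff_empty] at this
        exact hi this
      · rintro rfl; rfl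
    rw [this, Finset.sum_singleton]
  have hown : ∀ i, util (v i) p (own X i) = v i (X i) - π (Sum.inl i) := by
    intro i
    unfold util own
    by_cases hi : X i = ∅
    · rw [if_pos hi, hi, hI.zero _ hi]; simp
    · rw [if_neg hi]; simp [hpX i hi]
  have hrev : Revenue X p = ∑ i, π (Sum.inl i) := by
    unfold Revenue
    rw [Finset.sum_filter]
    apply Finset.sum_congr rfl
    intro i _
    split_ifs with hi
    · exact hpX i hi
    · push Not at hi
      exact (hI.zero _ hi).symm
  refine ⟨X, p, ⟨hAl, fun B _ => hp0 B, ?_⟩, ?_⟩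
  · intro i S hS
    rw [hown]
    by_cases hu : unalloc X ∈ S
    · have h1 : 0 ≤ v i (X i) - π (Sum.inl i) := by
        have := hsat i ∅
        simpa [ut, (hv i).2.2] using this
      have h2 : big ≤ ∑ B ∈ S, p B := by
        have := Finset.single_le_sum (f := p) (fun B _ => hp0 B) hu
        simpa [p] using this
      have h3 := (hv i).2.1 (S.sup id) univ (subset_univ _)
      have h4 := hbigge i
      unfold util
      linarith
    · set A : Finset (Fin n) := univ.filter (fun k => X k ∈ S) with hA
      have hSim : S = A.image X := by
        ext B
        simp only [hA, mem_image, mem_filter, mem_univ, true_and]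
        constructor
        · intro hB
          have h1 := hS hB
          unfold Bundles at h1
          rw [mem_erase, mem_insert, mem_image] at h1
          rcases h1.2 with h2 | ⟨k, -, h2⟩
          · exact absurd (h2 ▸ hB) hu
          · exact ⟨k, h2 ▸ hB, h2⟩
        · rintro ⟨k, hk, rfl⟩; exact hk
      have hsup : S.sup id = (A.map Function.Embedding.inl).sup Y := by
        rw [Finset.sup_map]
        conv_lhs => rw [hSim]
        rw [Finset.sup_image]
        rfl
      have hsm : ∑ B ∈ S, p B = ∑ b ∈ A.map Function.Embedding.inl, π b := by
        rw [Finset.sum_map]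
        conv_lhs => rw [hSim]
        have hne : ∀ k ∈ A, X k ≠ ∅ := by
          intro k hk
          have h1 := hS (mem_filter.mp hk).2
          exact (mem_erase.mp h1).1
        rw [Finset.sum_image]
        · exact Finset.sum_congr rfl fun k hk => hpX k (hne k hk)
        · intro a ha b hb hab
          by_contra hne'
          have := hAl a b hne'
          rw [hab, Finset.disjoint_self_iff_empty] at this
          exact hne b hb this
      have := hsat i (A.map Function.Embedding.inl)
      unfold ut at this
      unfold util
      rw [hsup, hsm]
      exact this
  · rw [hrev]
    have htot := hI.tot
    rw [Fintype.sum_sum_type] at htot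
    set N := univ.filter (fun i => X i ≠ ∅) with hN
    have h1 : q * N.card ≤ ∑ i, π (Sum.inl i) := by
      calc q * N.card = ∑ i ∈ N, q := by rw [Finset.sum_const, nsmul_eq_mul, mul_comm]
        _ ≤ ∑ i ∈ N, π (Sum.inl i) := Finset.sum_le_sum fun i hi => hI.ge _ (mem_filter.mp hi).2
        _ ≤ _ := Finset.sum_le_sum_of_subset_of_nonneg (subset_univ _) fun i _ _ => hπ0 _
    have h2 : ∑ j, π (Sum.inr j) ≤ q * N.card := by
      have : ∀ j, π (Sum.inr j) ≤ if X j ≠ ∅ then q else 0 := by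
        intro j
        rcases hI.dummy j with h0 | ⟨ha, hb, hc⟩
        · rw [hI.zero _ h0]; split_ifs
          · exact hq.le
          · exact le_rfl
        · have h3 := hsat j {Sum.inr j}
          unfold ut at h3
          rw [Finset.sup_singleton, Finset.sum_singleton, ha, hb] at h3
          have h4 := hJ j hc
          have hne : X j ≠ ∅ := by
            intro h0
            have h5 : Y (Sum.inl j) = ∅ := h0
            rw [h5, hI.zero _ h5, (hv j).2.2] at h3
            linarith
          rw [if_pos hne, hb]
      calc _ ≤ ∑ j, (if X j ≠ ∅ then q else 0) := Finset.sum_le_sum fun j _ => this j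
        _ = q * N.card := by rw [← Finset.sum_filter, Finset.sum_const, nsmul_eq_mul, mul_comm]
    linarith

/-- every valuation profile with `n ≥ 1` agents admits a CWE extracting revenue
at least `(max_Z SW(Z)) / (16·⌈log₂(2n)⌉)`, the maximum being over all allocations `Z`. -/
theorem exists_cwe_log_revenue_of_optimal {ι : Type} [Fintype ι] [DecidableEq ι] (n : ℕ)
    (hn : 1 ≤ n)
    (v : Fin n → Finset ι → ℝ) (hv : ∀ i, ValidVal (v i)) :
    ∃ (X : Fin n → Finset ι) (p : Finset ι → ℝ),
      IsCWE v X p ∧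
        ∀ Z : Fin n → Finset ι, IsAlloc Z →
          Revenue X p ≥ SW v Z / (16 * (Nat.clog 2 (2 * n) : ℝ)) := by
  classical
  have hclog : (0 : ℝ) < (Nat.clog 2 (2 * n) : ℝ) := by
    exact_mod_cast Nat.clog_pos (by norm_num) (by omega)
  obtain ⟨Z, hZm, hZmax⟩ := Finset.exists_max_image
    (univ.filter (fun Z : Fin n → Finset ι => IsAlloc Z)) (SW v)
    ⟨fun _ => ∅, mem_filter.mpr ⟨mem_univ _, fun _ _ _ => Finset.disjoint_empty_left _⟩⟩
  have hZ : IsAlloc Z := (mem_filter.mp hZm).2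
  have key : ∃ X p, IsCWE v X p ∧ SW v Z / (16 * (Nat.clog 2 (2 * n) : ℝ)) ≤ Revenue X p := by
    by_cases hO : 0 < SW v Z
    · obtain ⟨t, ht, hb⟩ := bucket n hn (fun i => v i (Z i)) (fun i => (hv i).1 _) hO
      obtain ⟨X, p, h1, h2⟩ := cwe_of_bucket (univ.filter (fun i => t ≤ v i (Z i))) Z hZ v hv
        (t / 2) (by linarith) (by
          intro j hj
          have := (mem_filter.mp hj).2
          linarith)
      refine ⟨X, p, h1, ?_⟩
      have e : SW v Z / (16 * (Nat.clog 2 (2 * n) : ℝ))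
          = (∑ i, v i (Z i)) / (4 * (Nat.clog 2 (2 * n) : ℝ)) / 4 := by
        unfold SW; field_simp; norm_num
      rw [e]
      linarith
    · obtain ⟨X, p, h1, h2⟩ := cwe_of_bucket ∅ Z hZ v hv 1 one_pos (by simp)
      refine ⟨X, p, h1, ?_⟩
      have : SW v Z / (16 * (Nat.clog 2 (2 * n) : ℝ)) ≤ 0 :=
        div_nonpos_of_nonpos_of_nonneg (not_lt.mp hO) (by positivity)
      simp at h2
      linarith
  obtain ⟨X, p, h1, h2⟩ := key
  refine ⟨X, p, h1, fun Z' hZ' => ?_⟩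
  refine ge_iff_le.mpr (le_trans ?_ h2)
  have := hZmax Z' (mem_filter.mpr ⟨mem_univ _, hZ'⟩)
  gcongr
end

section
/- Fix n ≥ 1 and consider the auction with n items and n unit-demand agents, where agent i's valuation is v_i(S) = 1/i for every nonempty S ⊆ M and v_i(∅) = 0. Then every Combinatorial Walrasian Equilibrium of this auction has revenue at most 1, while the optimal social welfare equals Σ_{i=1}^n 1/i. Hence no CWE extracts revenue exceeding a 1/(Σ_{i=1}^n 1/i) ≈ 1/ln(n) fraction of the optimal social welfare. -/
open Finset

/-- in the market with `n` items and `n` unit-demand agents where agent `i`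
values any nonempty set at `1/i` (`i = 1, …, n`), every CWE has revenue at most `1`, while the
optimal social welfare equals `∑_{i=1}^n 1/i`. -/
theorem cwe_revenue_log_separation (n : ℕ) (hn : 1 ≤ n)
    (v : Fin n → Finset (Fin n) → ℝ)
    (hv : ∀ (i : Fin n) (S : Finset (Fin n)),
      v i S = if S = ∅ then 0 else 1 / (((i : ℕ) : ℝ) + 1)) :
    (∀ (X : Fin n → Finset (Fin n)) (p : Finset (Fin n) → ℝ),
        IsCWE v X p → Revenue X p ≤ 1) ∧
      IsGreatest {w : ℝ | ∃ Z : Fin n → Finset (Fin n), IsAlloc Z ∧ SW v Z = w}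
        (∑ i : Fin n, 1 / (((i : ℕ) : ℝ) + 1)) := by
  constructor
  · intro X p hX
    obtain ⟨-, -, hopt⟩ := hX
    unfold Revenue
    by_cases hW : (Finset.univ.filter (fun i => X i ≠ ∅)).Nonempty
    swap
    · rw [Finset.not_nonempty_iff_eq_empty.mp hW]
      simp
    obtain ⟨i, hi, hmax⟩ := Finset.exists_max_image _ (fun i : Fin n => i) hW
    have hXi : X i ≠ ∅ := by simpa using hi
    have hle : ∀ j ∈ Finset.univ.filter (fun i => X i ≠ ∅), p (X j) ≤ p (X i) := by
      intro j hj
      have hXj : X j ≠ ∅ := by simpa using hj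
      have h := hopt j {X i} (by
        intro B hB
        rw [Finset.mem_singleton] at hB
        subst hB
        simp [Bundles, hXi])
      simp [util, own, hXj, hv, hXi] at h
      linarith
    have hpi : p (X i) ≤ 1 / (((i : ℕ) : ℝ) + 1) := by
      have h := hopt i ∅ (Finset.empty_subset _)
      simp [util, own, hv, hXi] at h
      rw [one_div]
      linarith
    have hcard : (Finset.univ.filter (fun i => X i ≠ ∅)).card ≤ (i : ℕ) + 1 := by
      rw [← Fin.card_Iic i]
      exact Finset.card_le_card (fun j hj => Finset.mem_Iic.mpr (hmax j hj))
    have hc : (((Finset.univ.filter (fun i => X i ≠ ∅)).card : ℕ) : ℝ) ≤ ((i : ℕ) : ℝ) + 1 := by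
      exact_mod_cast hcard
    have hpos : (0 : ℝ) < ((i : ℕ) : ℝ) + 1 := by positivity
    calc _ ≤ _ := Finset.sum_le_card_nsmul _ _ _ (fun j hj => (hle j hj).trans hpi)
      _ ≤ 1 := by
        rw [nsmul_eq_mul, mul_one_div, div_le_one hpos]
        exact hc
  · constructor
    · refine ⟨fun i => {i}, ?_, ?_⟩
      · intro i j hij
        simpa using hij
      · simp [SW, hv]
    · rintro w ⟨Z, -, rfl⟩
      refine Finset.sum_le_sum fun i _ => ?_
      rw [hv]
      split_ifs
      · positivity
      · exact le_rfl
end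

section
/- Let X = (X_0, X_1, …, X_n) be an allocation with nonnegative bundle prices p(X_i) for the nonempty bundles, let k ≥ 1 be the number of agents with X_i ≠ ∅ and SW_0 = Σ_{i=1}^n v_i(X_i) > 0. For t ≥ 1 set σ_t = 2^{t−1}·SW_0/(2k), W_t = {i : X_i ≠ ∅ and v_i(X_i) ≥ p(X_i) + σ_t}, SW_t = Σ_{i∈W_t} v_i(X_i), and REV_t = Σ_{i∈W_t} (p(X_i) + σ_t). Then for every t ≥ 1, SW_t − SW_{t+1} ≤ 2·REV_t. -/
open Finset

/-- with `σ_t = 2^(t−1)·SW₀/(2k)`, `W_t = {i : Xᵢ ≠ ∅ and vᵢ(Xᵢ) ≥ p(Xᵢ) + σ_t}`,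
`SW_t = ∑_{i∈W_t} vᵢ(Xᵢ)` and `REV_t = ∑_{i∈W_t} (p(Xᵢ) + σ_t)`, for every `t ≥ 1` one has
`SW_t − SW_{t+1} ≤ 2·REV_t`. -/
theorem welfare_drop_bounded_by_revenue {ι : Type} [Fintype ι] [DecidableEq ι] (n : ℕ)
    (v : Fin n → Finset ι → ℝ) (hv : ∀ i, ValidVal (v i))
    (X : Fin n → Finset ι) (hX : IsAlloc X)
    (p : Finset ι → ℝ) (hp : ∀ i : Fin n, X i ≠ ∅ → 0 ≤ p (X i))
    (k : ℕ) (hk : k = (Finset.univ.filter (fun i : Fin n => X i ≠ ∅)).card) (hk1 : 1 ≤ k)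
    (hSW : 0 < SW v X)
    (σ : ℕ → ℝ) (hσ : ∀ t : ℕ, σ t = 2 ^ (t - 1) * SW v X / (2 * k))
    (W : ℕ → Finset (Fin n))
    (hW : ∀ t : ℕ, W t =
      Finset.univ.filter (fun i : Fin n => X i ≠ ∅ ∧ p (X i) + σ t ≤ v i (X i))) :
    ∀ t : ℕ, 1 ≤ t →
      (∑ i ∈ W t, v i (X i)) - (∑ i ∈ W (t + 1), v i (X i))
        ≤ 2 * ∑ i ∈ W t, (p (X i) + σ t) := by
  intro t ht
  have hs : σ (t + 1) = 2 * σ t := by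
    rw [hσ, hσ]
    obtain ⟨m, rfl⟩ : ∃ m, t = m + 1 := ⟨t - 1, by omega⟩
    simp only [Nat.add_sub_cancel, pow_succ]
    ring
  have h0 : 0 ≤ σ t := by
    rw [hσ]
    have := hSW.le
    positivity
  have hsub : W (t + 1) ⊆ W t := by
    intro i hi
    rw [hW, Finset.mem_filter] at hi ⊢
    exact ⟨hi.1, hi.2.1, by linarith [hi.2.2]⟩
  have hd := Finset.sum_sdiff (f := fun i => v i (X i)) hsub
  have h1 : ∑ i ∈ W t \ W (t + 1), v i (X i) ≤ ∑ i ∈ W t \ W (t + 1), 2 * (p (X i) + σ t) := by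
    apply Finset.sum_le_sum
    intro i hi
    rw [Finset.mem_sdiff, hW, hW, Finset.mem_filter, Finset.mem_filter] at hi
    obtain ⟨⟨hu, hne, -⟩, h2⟩ := hi
    have h3 : v i (X i) < p (X i) + σ (t + 1) := by
      by_contra hc
      exact h2 ⟨hu, hne, not_lt.mp hc⟩
    linarith [hp i hne]
  have h2 : ∑ i ∈ W t \ W (t + 1), 2 * (p (X i) + σ t) ≤ ∑ i ∈ W t, 2 * (p (X i) + σ t) := by
    apply Finset.sum_le_sum_of_subset_of_nonneg Finset.sdiff_subset
    intro i hi _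
    rw [hW, Finset.mem_filter] at hi
    linarith [hp i hi.2.1]
  rw [Finset.mul_sum]
  linarith
end

section
/- Let (X, p) be a Combinatorial Walrasian Equilibrium. Then the allocation of the sold bundles is socially efficient among reallocations of those bundles: for every assignment of pairwise disjoint sets Z_1, …, Z_n, where each Z_i is a union of some of the allocated bundles {X_j : j ≥ 1, X_j ≠ ∅} and no allocated bundle is used by two agents, it holds that Σ_{i=1}^n v_i(Z_i) ≤ Σ_{i=1}^n v_i(X_i). -/
open Finset

/-- a CWE allocates the sold bundles efficiently: for every assignment of
pairwise disjoint sets `Zᵢ` of allocated bundles (no allocated bundle used by two agents),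
the welfare `∑ᵢ vᵢ(∪ Zᵢ)` is at most the welfare of the CWE allocation. -/
theorem cwe_efficient_over_sold_bundles {ι : Type} [Fintype ι] [DecidableEq ι] (n : ℕ)
    (v : Fin n → Finset ι → ℝ) (hv : ∀ i, ValidVal (v i))
    (X : Fin n → Finset ι) (p : Finset ι → ℝ) (hcwe : IsCWE v X p)
    (Z : Fin n → Finset (Finset ι))
    (hZsub : ∀ i, Z i ⊆ (Finset.image X Finset.univ).erase ∅)
    (hZdisj : ∀ i j, i ≠ j → Disjoint (Z i) (Z j)) :
    ∑ i, v i ((Z i).sup id) ≤ ∑ i, v i (X i) := by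
  obtain ⟨hX, hp, hu⟩ := hcwe
  have hsubB : (Finset.image X Finset.univ).erase ∅ ⊆ Bundles X :=
    Finset.erase_subset_erase _ (Finset.subset_insert _ _)
  have hsup : ∀ i, (own X i).sup id = X i := by
    intro i
    unfold own
    split_ifs with h
    · simp [h]
    · simp
  have h1 : ∀ i, v i ((Z i).sup id) - ∑ B ∈ Z i, p B ≤ v i (X i) - ∑ B ∈ own X i, p B := by
    intro i
    have h := hu i (Z i) ((hZsub i).trans hsubB)
    unfold util at h
    rwa [hsup] at h
  have hmem : ∀ i B, B ∈ own X i ↔ B = X i ∧ B ≠ ∅ := by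
    intro i B
    unfold own
    split_ifs with h
    · simp [h]
    · simp only [Finset.mem_singleton]
      constructor
      · rintro rfl
        exact ⟨rfl, h⟩
      · exact fun h => h.1
  have hown : ∀ i j, i ≠ j → Disjoint (own X i) (own X j) := by
    intro i j hij
    rw [Finset.disjoint_left]
    intro B hi hj
    rw [hmem] at hi hj
    have hd := hX i j hij
    rw [← hi.1, ← hj.1, disjoint_self] at hd
    exact hi.2 hd
  have h2 : ∑ i, ∑ B ∈ Z i, p B ≤ ∑ i, ∑ B ∈ own X i, p B := by
    rw [← Finset.sum_biUnion (fun i _ j _ h => hZdisj i j h),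
      ← Finset.sum_biUnion (fun i _ j _ h => hown i j h)]
    apply Finset.sum_le_sum_of_subset_of_nonneg
    · intro B hB
      obtain ⟨i, -, hi⟩ := Finset.mem_biUnion.1 hB
      obtain ⟨hne, him⟩ := Finset.mem_erase.1 (hZsub i hi)
      obtain ⟨j, -, hj⟩ := Finset.mem_image.1 him
      exact Finset.mem_biUnion.2 ⟨j, Finset.mem_univ _, (hmem j B).2 ⟨hj.symm, hne⟩⟩
    · intro B hB _
      obtain ⟨i, -, hi⟩ := Finset.mem_biUnion.1 hB
      obtain ⟨he, hne⟩ := (hmem i B).1 hi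
      exact hp B (hsubB (Finset.mem_erase.2
        ⟨hne, Finset.mem_image.2 ⟨i, Finset.mem_univ _, he.symm⟩⟩))
  have h3 := Finset.sum_le_sum (fun i (_ : i ∈ Finset.univ) => h1 i)
  rw [Finset.sum_sub_distrib, Finset.sum_sub_distrib] at h3
  linarith
end
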